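/- arXiv:1308.1286 — 2 statements merged into one kernel-verified Lean document; each statement's English description precedes it below -/
import Mathlib

section
/- For every positive integer m and every ε > 0 there exists l such that for every finite field F_q and every integer n ≥ 2, there is a subset S ⊆ SL_n(F_q) with |S| ≤ ε · |SL_n(F_q)| such that every g ∈ SL_n(F_q) \ S satisfies #{h ∈ SL_n(F_q) : h^m = g^m} < q^{l · (log n)^4}. -/
section LinearAlgebra
open Polynomial Module UniqueFactorizationMonoid
variable {F V : Type*} [Field F] [AddCommGroup V] [Module F V]

theorem aeval_apply_mem {x : End F V} {U : Submodule F V} (hU : U ≤ U.comap x) (a : F[X])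
    {u : V} (hu : u ∈ U) : aeval x a u ∈ U := by
  induction a using Polynomial.induction_on' with
  | add p q hp hq => simpa using U.add_mem hp hq
  | monomial k c =>
    have hk : (x ^ k) u ∈ U := by
      induction k with
      | zero => simpa
      | succ k ih => rw [pow_succ']; exact hU ih
    rw [aeval_monomial, ← Algebra.smul_def]
    exact U.smul_mem c hk

theorem mem_of_aeval_mem {x : End F V} {U : Submodule F V} (hU : U ≤ U.comap x) {a Q : F[X]}
    (h : IsCoprime a Q) {w : V} (ha : aeval x a w ∈ U) (hQ : aeval x Q w ∈ U) : w ∈ U := by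
  obtain ⟨b, c, hbc⟩ := h
  have : w = aeval x b (aeval x a w) + aeval x c (aeval x Q w) := by
    rw [← Module.End.mul_apply, ← Module.End.mul_apply, ← map_mul, ← map_mul,
      ← LinearMap.add_apply, ← map_add, hbc]
    simp
  rw [this]
  exact U.add_mem (aeval_apply_mem hU _ ha) (aeval_apply_mem hU _ hQ)

/-- The linear map `a ↦ a(x) w` on polynomials of degree less than `d`. -/
noncomputable def cyclicMap (x : End F V) (w : V) (d : ℕ) : degreeLT F d →ₗ[F] V :=
  ((LinearMap.applyₗ w).comp (aeval x).toLinearMap).comp (degreeLT F d).subtype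

theorem finrank_degreeLT (d : ℕ) : finrank F (degreeLT F d) = d := by
  rw [(degreeLTEquiv F d).finrank_eq]; simp

instance (d : ℕ) : FiniteDimensional F (degreeLT F d) :=
  Module.Finite.equiv (degreeLTEquiv F d).symm

theorem isCoprime_of_mem_degreeLT {Q a : F[X]} (hQ : Irreducible Q)
    (ha : a ∈ degreeLT F Q.natDegree)
    (h0 : a ≠ 0) : IsCoprime a Q := by
  refine IsCoprime.symm <| (hQ.coprime_iff_not_dvd).2 fun h ↦ ?_
  rw [mem_degreeLT, ← degree_eq_natDegree hQ.ne_zero] at ha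
  exact h0 (eq_zero_of_dvd_of_degree_lt h ha)

theorem finrank_add_natDegree_le [FiniteDimensional F V] {x : End F V} {U U' : Submodule F V}
    (hU : U ≤ U.comap x) (hU' : U' ≤ U'.comap x) (hlt : U < U') {Q : F[X]} (hQ : Irreducible Q)
    (h : ∀ w ∈ U', aeval x Q w ∈ U) : finrank F U + Q.natDegree ≤ finrank F U' := by
  obtain ⟨w, hw', hw⟩ := SetLike.exists_of_lt hlt
  let T : (U × degreeLT F Q.natDegree) →ₗ[F] U' :=
    (Submodule.inclusion hlt.le).coprod
      ((cyclicMap x w Q.natDegree).codRestrict U' fun a ↦ aeval_apply_mem hU' _ hw')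
  have hT : Function.Injective T := by
    rw [← LinearMap.ker_eq_bot, LinearMap.ker_eq_bot']
    rintro ⟨u, a⟩ hua
    have hua' : (u : V) + aeval x (a : F[X]) w = 0 := by
      exact congr_arg Subtype.val hua
    have ha : a = 0 := by
      by_contra ha
      refine hw (mem_of_aeval_mem hU (isCoprime_of_mem_degreeLT hQ a.2 (by simpa using ha))
        ?_ (h w hw'))
      rw [← neg_eq_of_add_eq_zero_right hua']
      exact U.neg_mem u.2
    subst ha
    simpa using hua'
  simpa [finrank_degreeLT] using LinearMap.finrank_le_finrank_of_injective hT

theorem ker_aeval_invariant (x : End F V) (f : F[X]) :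
    LinearMap.ker (aeval x f) ≤ (LinearMap.ker (aeval x f)).comap x := by
  intro v hv
  have : Commute (aeval x f) x := by
    simpa using (Commute.all f X).map (aeval x)
  rw [LinearMap.mem_ker] at hv
  rw [Submodule.mem_comap, LinearMap.mem_ker, ← Module.End.mul_apply, this.eq,
    Module.End.mul_apply, hv, map_zero]

theorem ker_pow_eq_of_finrank_lt [FiniteDimensional F V] {x : End F V} {Q : F[X]}
    (hQ : Irreducible Q) {k : ℕ}
    (h : finrank F (LinearMap.ker (aeval x Q ^ (k + 1))) < (k + 1) * Q.natDegree) (j : ℕ) :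
    LinearMap.ker (aeval x Q ^ (k + j)) = LinearMap.ker (aeval x Q ^ k) := by
  have inv (i : ℕ) := ker_aeval_invariant x (Q ^ i)
  simp only [map_pow] at inv
  obtain ⟨i, hik, hi⟩ : ∃ i < k + 1,
      LinearMap.ker (aeval x Q ^ i) = LinearMap.ker (aeval x Q ^ (i + 1)) := by
    by_contra! hne
    refine absurd h (not_lt.2 ?_)
    suffices ∀ i ≤ k + 1, i * Q.natDegree ≤ finrank F (LinearMap.ker (aeval x Q ^ i)) from
      this (k + 1) le_rfl
    intro i
    induction i with
    | zero => simp
    | succ i ih =>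
      intro hi
      rw [add_mul, one_mul]
      refine (Nat.add_le_add_right (ih (by omega)) _).trans
        (finrank_add_natDegree_le (inv i) (inv (i + 1)) (lt_of_le_of_ne ?_ (hne i (by omega)))
          hQ ?_)
      · rw [pow_succ']
        exact LinearMap.ker_le_ker_comp _ _
      · intro w hw
        rwa [LinearMap.mem_ker, ← Module.End.mul_apply, ← pow_succ]
  have key := Module.End.ker_pow_constant hi
  rw [show k + j = i + (k - i + j) by omega, ← key, key (k - i), Nat.add_sub_cancel' (by omega)]

/-- The restrictions to `U` of the `m`-th roots of `x`. -/
def rootRestrictions (x : End F V) (m : ℕ) (U : Submodule F V) : Set (U →ₗ[F] V) :=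
  (fun h : End F V ↦ h.domRestrict U) '' {h | h ^ m = x}

theorem commute_aeval_of_pow_eq {h x : End F V} {m : ℕ} (hh : h ^ m = x) (f : F[X]) :
    Commute h (aeval x f) := by
  have : Commute h x := hh ▸ Commute.self_pow h m
  rw [aeval_eq_sum_range]
  exact Commute.sum_right _ _ _ fun i _ ↦ (this.pow_right i).smul_right _

theorem ncard_rootRestrictions_le_pow [Finite F] [FiniteDimensional F V] (x : End F V) (m : ℕ)
    (f : F[X]) : (rootRestrictions x m (LinearMap.ker (aeval x f))).ncard ≤
      Nat.card F ^ (finrank F (LinearMap.ker (aeval x f)) ^ 2) := by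
  set U := LinearMap.ker (aeval x f)
  have : Finite V := Module.finite_of_finite F
  have : Finite U := Module.finite_of_finite F
  have hfin : Finite (U →ₗ[F] U) := Module.finite_of_finite F
  have : rootRestrictions x m U ⊆ (fun φ : U →ₗ[F] U ↦ U.subtype.comp φ) '' Set.univ := by
    rintro _ ⟨h, hh, rfl⟩
    refine ⟨h.restrict (p := U) (q := U) fun v hv ↦ ?_, trivial, ?_⟩
    · have := commute_aeval_of_pow_eq hh f
      rw [LinearMap.mem_ker] at hv ⊢
      rw [← Module.End.mul_apply, ← this.eq, Module.End.mul_apply, hv, map_zero]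
    · ext; simp
  refine (Set.ncard_le_ncard this (Set.toFinite _)).trans
    ((Set.ncard_image_le (Set.toFinite _)).trans ?_)
  rw [Set.ncard_univ, Module.natCard_eq_pow_finrank (K := F), Module.finrank_linearMap, sq]

theorem exists_aeval_eq_of_finrank_lt [FiniteDimensional F V] {x : End F V} {Q : F[X]}
    (hQ : Irreducible Q) (hd : finrank F (LinearMap.ker (aeval x Q)) < 2 * Q.natDegree)
    {v : V} (hv : v ∈ LinearMap.ker (aeval x Q)) (hv0 : v ≠ 0) {w : V}
    (hw : w ∈ LinearMap.ker (aeval x Q)) : ∃ a : F[X], w = aeval x a v := by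
  let U : Submodule F V := LinearMap.range ((LinearMap.applyₗ v).comp (aeval x).toLinearMap)
  have mem_U (u : V) : u ∈ U ↔ ∃ a : F[X], aeval x a v = u := Iff.rfl
  have hU : U ≤ U.comap x := by
    rintro u hu
    obtain ⟨a, rfl⟩ := (mem_U u).1 hu
    exact (mem_U _).2 ⟨X * a, by simp⟩
  have hvU : v ∈ U := (mem_U v).2 ⟨1, by simp⟩
  have hle : U ≤ LinearMap.ker (aeval x Q) := by
    intro u hu
    obtain ⟨a, rfl⟩ := (mem_U u).1 hu
    exact aeval_apply_mem (ker_aeval_invariant x Q) a hv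
  have h1 : Q.natDegree ≤ finrank F U := by
    have := finrank_add_natDegree_le (x := x) (U := ⊥) (by simp) hU
      (bot_lt_iff_ne_bot.2 fun h ↦ hv0 (by simpa [h] using hvU)) hQ
      fun u hu ↦ by simpa using hle hu
    simpa using this
  rcases hle.lt_or_eq with hlt | heq
  · have := finrank_add_natDegree_le hU (ker_aeval_invariant x Q) hlt hQ fun u hu ↦ by
      rw [LinearMap.mem_ker] at hu
      rw [hu]
      exact U.zero_mem
    omega
  · obtain ⟨a, ha⟩ := (mem_U w).1 (heq ▸ hw)
    exact ⟨a, ha.symm⟩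

theorem ncard_rootRestrictions_le [FiniteDimensional F V] {x : End F V} {m : ℕ} (hm : 0 < m)
    {Q : F[X]} (hQ : Irreducible Q)
    (hd : finrank F (LinearMap.ker (aeval x Q)) < 2 * Q.natDegree) :
    (rootRestrictions x m (LinearMap.ker (aeval x Q))).ncard ≤ m := by
  classical
  set U := LinearMap.ker (aeval x Q) with hUdef
  by_cases hbot : U = ⊥
  · have : (rootRestrictions x m U).Subsingleton := by
      intro φ _ ψ _
      ext ⟨u, hu⟩
      have : u = 0 := by simpa [hbot] using hu
      subst this
      exact (map_zero φ).trans (map_zero ψ).symm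
    have := this.finite.to_subtype
    exact (Set.ncard_le_one_iff_subsingleton.2 ‹_›).trans hm
  obtain ⟨v, hv, hv0⟩ := U.ne_bot_iff.1 hbot
  have : Fact (Irreducible Q) := ⟨hQ⟩
  have hex (φ : U →ₗ[F] V) (hφ : φ ∈ rootRestrictions x m U) :
      ∃ a : F[X], φ ⟨v, hv⟩ = aeval x a v := by
    obtain ⟨h, hh, rfl⟩ := hφ
    refine exists_aeval_eq_of_finrank_lt hQ hd hv hv0 ?_
    have hc := commute_aeval_of_pow_eq hh Q
    rw [hUdef, LinearMap.mem_ker] at hv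
    rw [LinearMap.mem_ker, LinearMap.domRestrict_apply, ← Module.End.mul_apply, ← hc.eq,
      Module.End.mul_apply, hv, map_zero]
  choose! a ha using hex
  refine (Set.ncard_le_ncard_of_injOn (fun φ ↦ AdjoinRoot.mk Q (a φ))
    (t := ((nthRoots m (AdjoinRoot.root Q)).toFinset : Set (AdjoinRoot Q))) ?_ ?_
    (Finset.finite_toSet _)).trans ?_
  · intro φ hφ
    obtain ⟨h, hh, rfl⟩ := id hφ
    have haφ := ha _ hφ
    set b := a (h.domRestrict U)
    rw [Finset.mem_coe, Multiset.mem_toFinset, mem_nthRoots hm, ← map_pow, ← AdjoinRoot.mk_X,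
      AdjoinRoot.mk_eq_mk]
    by_contra hndvd
    have hpow (i : ℕ) : (h ^ i) v = aeval x (b ^ i) v := by
      induction i with
      | zero => simp
      | succ i ih =>
        have hhv : h v = aeval x b v := haφ
        rw [pow_succ', Module.End.mul_apply, ih, ← Module.End.mul_apply,
          (commute_aeval_of_pow_eq hh _).eq, Module.End.mul_apply, hhv, ← Module.End.mul_apply,
          ← map_mul, pow_succ]
    refine hv0 (mem_of_aeval_mem (x := x) (U := ⊥) (by simp)
      ((hQ.coprime_iff_not_dvd.2 hndvd).symm) ?_ hv)
    have hhm : h ^ m = x := hh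
    rw [Submodule.mem_bot, map_sub, LinearMap.sub_apply, ← hpow, hhm, aeval_X, sub_self]
  · intro φ hφ ψ hψ heq
    have hdvd := AdjoinRoot.mk_eq_mk.1 heq
    have hval : φ ⟨v, hv⟩ = ψ ⟨v, hv⟩ := by
      rw [ha φ hφ, ha ψ hψ, ← sub_eq_zero, ← LinearMap.sub_apply, ← map_sub]
      obtain ⟨c, hc⟩ := hdvd
      rw [hc, mul_comm, map_mul, Module.End.mul_apply, LinearMap.mem_ker.1 hv, map_zero]
    obtain ⟨h, hh, rfl⟩ := hφ
    obtain ⟨h', hh', rfl⟩ := hψ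
    have hval' : h v = h' v := hval
    ext ⟨u, hu⟩
    obtain ⟨c, rfl⟩ := exists_aeval_eq_of_finrank_lt hQ hd hv hv0 hu
    simp only [LinearMap.domRestrict_apply]
    rw [← Module.End.mul_apply, (commute_aeval_of_pow_eq hh c).eq, Module.End.mul_apply, hval',
      ← Module.End.mul_apply, ← (commute_aeval_of_pow_eq hh' c).eq, Module.End.mul_apply]
  · rw [Set.ncard_coe_finset]
    exact (Multiset.toFinset_card_le _).trans (card_nthRoots _ _)

theorem ker_aeval_prod_le_iSup {ι : Type*} (x : End F V) (s : Finset ι) (f : ι → F[X])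
    (hf : Set.Pairwise (s : Set ι) fun i j ↦ IsCoprime (f i) (f j)) :
    LinearMap.ker (aeval x (∏ i ∈ s, f i)) ≤ ⨆ i ∈ s, LinearMap.ker (aeval x (f i)) := by
  classical
  induction s using Finset.induction_on with
  | empty => intro v hv; simpa using hv
  | insert a s ha ih =>
    rw [Finset.prod_insert ha, ← sup_ker_aeval_eq_ker_aeval_mul_of_coprime, Finset.iSup_insert]
    · exact sup_le_sup_left (ih (hf.mono (by simp))) _
    · exact IsCoprime.prod_right fun i hi ↦
        hf (by simp) (by simp [hi]) (by rintro rfl; exact ha hi)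

theorem card_pow_eq_le [Finite V] (x : End F V) (m B : ℕ) (s : Finset F[X]) (f : F[X] → F[X])
    (hf : Set.Pairwise (s : Set F[X]) fun i j ↦ IsCoprime (f i) (f j))
    (hx : aeval x (∏ Q ∈ s, f Q) = 0)
    (hB : ∀ Q ∈ s, (rootRestrictions x m (LinearMap.ker (aeval x (f Q)))).ncard ≤ B) :
    Nat.card {h : End F V // h ^ m = x} ≤ B ^ s.card := by
  have hfin (U : Submodule F V) : Finite (U →ₗ[F] V) := DFunLike.finite _
  have htop : ⨆ Q ∈ s, LinearMap.ker (aeval x (f Q)) = ⊤ := by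
    refine top_le_iff.1 (le_trans ?_ (ker_aeval_prod_le_iSup x s f hf))
    rw [hx, LinearMap.ker_zero]
  let Φ (h : {h : End F V // h ^ m = x}) (Q : s) :
      rootRestrictions x m (LinearMap.ker (aeval x (f Q))) :=
    ⟨h.1.domRestrict _, h.1, h.2, rfl⟩
  have hΦ : Function.Injective Φ := by
    rintro h h' heq
    refine Subtype.ext (LinearMap.eqLocus_eq_top.1 (top_le_iff.1 ?_))
    rw [← htop]
    refine iSup₂_le fun Q hQ v hv ↦ ?_
    exact congr($(congr_fun heq ⟨Q, hQ⟩).1 ⟨v, hv⟩)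
  refine (Nat.card_le_card_of_injective Φ hΦ).trans ?_
  rw [Nat.card_pi]
  refine (Finset.prod_le_pow_card _ _ B fun Q _ ↦ ?_).trans (by simp)
  exact hB Q Q.2

open Classical in
/-- The monic irreducible factors of a polynomial. -/
noncomputable def monicFactors (f : F[X]) : Finset F[X] := (normalizedFactors f).toFinset

theorem mem_monicFactors {f : F[X]} (hf : f ≠ 0) {Q : F[X]} :
    Q ∈ monicFactors f ↔ Q.Monic ∧ Irreducible Q ∧ Q ∣ f := by
  classical
  rw [monicFactors, Multiset.mem_toFinset]
  constructor
  · intro hQ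
    refine ⟨?_, irreducible_of_normalized_factor Q hQ, dvd_of_mem_normalizedFactors hQ⟩
    rw [← normalize_normalized_factor Q hQ]
    exact monic_normalize (irreducible_of_normalized_factor Q hQ).ne_zero
  · rintro ⟨hm, hi, hd⟩
    exact (mem_normalizedFactors_iff' hf).2 ⟨hi, hm.normalize_eq_self, hd⟩

theorem isCoprime_of_monic_irreducible {P Q : F[X]} (hP : P.Monic) (hPi : Irreducible P)
    (hQ : Q.Monic) (hQi : Irreducible Q) (hne : P ≠ Q) : IsCoprime P Q :=
  hPi.coprime_iff_not_dvd.2 fun hdvd ↦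
    hne (eq_of_monic_of_associated hP hQ (hPi.associated_of_dvd hQi hdvd))

theorem card_pow_eq_le_of_finrank_lt [Finite F] [FiniteDimensional F V]
    {x : End F V} {m k D : ℕ} (hm : 0 < m)
    (h1 : ∀ Q : F[X], Q.Monic → Irreducible Q →
      finrank F (LinearMap.ker (aeval x (Q ^ (k + 1)))) < (k + 1) * Q.natDegree)
    (h2 : ∀ Q : F[X], Q.Monic → Irreducible Q → D < Q.natDegree →
      finrank F (LinearMap.ker (aeval x (Q ^ 2))) < 2 * Q.natDegree) :
    Nat.card {h : End F V // h ^ m = x} ≤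
      (Nat.card F ^ (m + ((k + 1) * D) ^ 2)) ^ (monicFactors (minpoly F x)).card := by
  classical
  have : Finite V := Module.finite_of_finite F
  have hmon : (minpoly F x).Monic := minpoly.monic (IsIntegral.of_finite F x)
  have hirr (Q : F[X]) (hQ : Q ∈ monicFactors (minpoly F x)) : Q.Monic ∧ Irreducible Q :=
    ⟨((mem_monicFactors hmon.ne_zero).1 hQ).1, ((mem_monicFactors hmon.ne_zero).1 hQ).2.1⟩
  set N := (normalizedFactors (minpoly F x)).card with hN
  refine card_pow_eq_le x m _ _ (fun Q ↦ Q ^ (N + (k + 1))) ?_ ?_ ?_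
  · intro P hP Q hQ hne
    exact (isCoprime_of_monic_irreducible (hirr P hP).1 (hirr P hP).2 (hirr Q hQ).1 (hirr Q hQ).2
      hne).pow
  · have hdvd : minpoly F x ∣ ∏ Q ∈ monicFactors (minpoly F x), Q ^ (N + (k + 1)) := by
      conv_lhs => rw [← hmon.normalize_eq_self, ← prod_normalizedFactors_eq hmon.ne_zero,
        Finset.prod_multiset_count]
      exact Finset.prod_dvd_prod_of_dvd _ _ fun Q _ ↦
        pow_dvd_pow _ ((Multiset.count_le_card _ _).trans (Nat.le_add_right _ _))
    obtain ⟨c, hc⟩ := hdvd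
    rw [hc, map_mul, minpoly.aeval, zero_mul]
  · intro Q hQ
    have hq : 2 ≤ Nat.card F := Finite.one_lt_card
    obtain ⟨hQm, hQi⟩ := hirr Q hQ
    rcases lt_or_ge D Q.natDegree with hD | hD
    · have h := h2 Q hQm hQi hD
      rw [map_pow] at h
      have hker := ker_pow_eq_of_finrank_lt (k := 1) hQi h
      have hker' := hker (N + k)
      rw [hker 1, pow_one] at h
      rw [pow_one, add_comm 1, ← map_pow] at hker'
      rw [← add_assoc, hker']
      refine (ncard_rootRestrictions_le hm hQi h).trans ?_
      exact (Nat.lt_pow_self hq).le.trans (Nat.pow_le_pow_right (by omega) (by omega))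
    · have h := h1 Q hQm hQi
      rw [map_pow] at h
      have hker := ker_pow_eq_of_finrank_lt hQi h
      have hker' : LinearMap.ker (aeval x (Q ^ (N + (k + 1)))) =
          LinearMap.ker (aeval x Q ^ (k + 1)) := by
        rw [map_pow, hker 1, ← hker (N + 1)]
        congr 2
        omega
      refine (ncard_rootRestrictions_le_pow x m _).trans (Nat.pow_le_pow_right (by omega) ?_)
      rw [hker']
      refine le_add_left (Nat.pow_le_pow_left (h.le.trans ?_) 2)
      gcongr

end LinearAlgebra

section Factors
open Polynomial Module UniqueFactorizationMonoid
variable {F : Type*} [Field F]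

theorem natDegree_le_of_dvd_comp {Q P R : F[X]} (hQ : Irreducible Q) (hP : Irreducible P)
    (h : P ∣ Q.comp R) : Q.natDegree ≤ P.natDegree := by
  have : Fact (Irreducible P) := ⟨hP⟩
  have : FiniteDimensional F (AdjoinRoot P) := (AdjoinRoot.powerBasis hP.ne_zero).finite
  set b := aeval (AdjoinRoot.root P) R
  have hb : aeval b Q = 0 := by
    rw [← aeval_comp, AdjoinRoot.aeval_eq]
    exact AdjoinRoot.mk_eq_zero.2 h
  calc Q.natDegree = (minpoly F b).natDegree :=
        natDegree_eq_of_degree_eq (degree_eq_degree_of_associated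
          ((minpoly.irreducible (IsIntegral.of_finite F b)).associated_of_dvd hQ
            (minpoly.dvd F b hb)).symm)
    _ ≤ finrank F (AdjoinRoot P) := minpoly.natDegree_le b
    _ = P.natDegree := by
        rw [(AdjoinRoot.powerBasis hP.ne_zero).finrank, AdjoinRoot.powerBasis_dim]

theorem card_normalizedFactors_mul_le [DecidableEq F] {f : F[X]} (hf : f ≠ 0) {d : ℕ}
    (h : ∀ P, Irreducible P → P ∣ f → d ≤ P.natDegree) :
    (normalizedFactors f).card * d ≤ f.natDegree := by
  have h0 : (0 : F[X]) ∉ normalizedFactors f := zero_notMem_normalizedFactors f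
  calc (normalizedFactors f).card * d
      ≤ ((normalizedFactors f).map natDegree).sum := by
        rw [← smul_eq_mul, ← Multiset.card_map natDegree]
        refine Multiset.card_nsmul_le_sum fun i hi ↦ ?_
        obtain ⟨P, hP, rfl⟩ := Multiset.mem_map.1 hi
        exact h P (irreducible_of_normalized_factor P hP) (dvd_of_mem_normalizedFactors hP)
    _ = (normalizedFactors f).prod.natDegree := (natDegree_multiset_prod _ h0).symm
    _ = f.natDegree := natDegree_eq_of_degree_eq
        (degree_eq_degree_of_associated (prod_normalizedFactors hf))

theorem card_monicFactors_mul_le {f : F[X]} (hf : f ≠ 0) {d : ℕ}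
    (h : ∀ P, Irreducible P → P ∣ f → d ≤ P.natDegree) :
    (monicFactors f).card * d ≤ f.natDegree := by
  classical
  exact (Nat.mul_le_mul_right d (Multiset.toFinset_card_le _)).trans
    (card_normalizedFactors_mul_le hf h)

open Classical in
theorem injective_count_normalizedFactors {f : F[X]} (hf : f ≠ 0) :
    Function.Injective fun (e : {e : F[X] // e.Monic ∧ e ∣ f})
      (P : monicFactors f) ↦ (normalizedFactors e.1).count P.1 := by
  rintro ⟨e, he, hef⟩ ⟨e', he', hef'⟩ heq
  refine Subtype.ext ?_
  change e = e'
  rw [← he.normalize_eq_self, ← he'.normalize_eq_self, ← prod_normalizedFactors_eq he.ne_zero,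
    ← prod_normalizedFactors_eq he'.ne_zero]
  congr 1
  ext P
  by_cases hP : P ∈ monicFactors f
  · exact congr_fun heq ⟨P, hP⟩
  · have aux {e : F[X]} (he : e.Monic) (hef : e ∣ f) : (normalizedFactors e).count P = 0 := by
      refine Multiset.count_eq_zero.2 fun hPe ↦ hP ?_
      have : P ∈ monicFactors e := by
        rw [monicFactors, Multiset.mem_toFinset]
        convert hPe
      obtain ⟨h1, h2, h3⟩ := (mem_monicFactors he.ne_zero).1 this
      exact (mem_monicFactors hf).2 ⟨h1, h2, h3.trans hef⟩
    rw [aux he hef, aux he' hef']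

theorem card_monic_dvd_le {Q : F[X]} (hQ : Irreducible Q) {m : ℕ} (hm : 0 < m) (k : ℕ) :
    Finite {e : F[X] // e.Monic ∧ e ∣ Q.comp (X ^ m) ^ k} ∧
    Nat.card {e : F[X] // e.Monic ∧ e ∣ Q.comp (X ^ m) ^ k} ≤ (m * k + 1) ^ m := by
  classical
  have hd : 0 < Q.natDegree := hQ.natDegree_pos
  have hdeg : (Q.comp (X ^ m)).natDegree = Q.natDegree * m := by simp [natDegree_comp]
  have hR : Q.comp (X ^ m) ≠ 0 := ne_zero_of_natDegree_gt (n := 0) (hdeg ▸ Nat.mul_pos hd hm)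
  set f := Q.comp (X ^ m) ^ k with hfdef
  have hf : f ≠ 0 := pow_ne_zero _ hR
  have hcard : (normalizedFactors f).card ≤ m * k := by
    have := card_normalizedFactors_mul_le hf (d := Q.natDegree) fun P hP hPf ↦
      natDegree_le_of_dvd_comp hQ hP (hP.prime.dvd_of_dvd_pow hPf)
    rw [hfdef, natDegree_pow, hdeg] at this
    refine Nat.le_of_mul_le_mul_right (this.trans_eq ?_) hd
    ring
  have hT : (monicFactors f).card ≤ m := by
    have := card_monicFactors_mul_le hR (d := Q.natDegree) fun P hP hPf ↦
      natDegree_le_of_dvd_comp hQ hP hPf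
    rw [hdeg, mul_comm Q.natDegree] at this
    refine (Finset.card_le_card fun P hP ↦ ?_).trans (Nat.le_of_mul_le_mul_right this hd)
    obtain ⟨h1, h2, h3⟩ := (mem_monicFactors hf).1 hP
    exact (mem_monicFactors hR).2 ⟨h1, h2, h2.prime.dvd_of_dvd_pow h3⟩
  let Φ (e : {e : F[X] // e.Monic ∧ e ∣ f}) (P : monicFactors f) : Fin (m * k + 1) :=
    ⟨(normalizedFactors e.1).count P.1, Nat.lt_succ_of_le <| (Multiset.count_le_card _ _).trans <|
      (Multiset.card_le_card ((dvd_iff_normalizedFactors_le_normalizedFactors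
        e.2.1.ne_zero hf).1 e.2.2)).trans hcard⟩
  have hΦ : Function.Injective Φ := fun e e' h ↦ injective_count_normalizedFactors hf
    (funext fun P ↦ congr_arg Fin.val (congr_fun h P))
  refine ⟨Finite.of_injective Φ hΦ, (Nat.card_le_card_of_injective Φ hΦ).trans ?_⟩
  rw [Nat.card_fun, Nat.card_eq_fintype_card, Fintype.card_fin, Nat.card_eq_fintype_card,
    Fintype.card_coe]
  exact Nat.pow_le_pow_right (by omega) hT

/-- The monic irreducible polynomials of degree `d` over a finite field. -/
noncomputable def monicIrreducibles (F : Type*) [Field F] (d : ℕ) : Finset F[X] :=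
  (monicFactors (X ^ Nat.card F ^ d - X : F[X])).filter fun Q ↦ Q.natDegree = d

theorem mem_monicIrreducibles [Finite F] {d : ℕ} (hd : 0 < d) {Q : F[X]} :
    Q ∈ monicIrreducibles F d ↔ Q.Monic ∧ Irreducible Q ∧ Q.natDegree = d := by
  have h0 : (X ^ Nat.card F ^ d - X : F[X]) ≠ 0 :=
    FiniteField.X_pow_card_pow_sub_X_ne_zero _ hd.ne' Finite.one_lt_card
  rw [monicIrreducibles, Finset.mem_filter, mem_monicFactors h0]
  constructor
  · tauto
  · rintro ⟨h1, h2, h3⟩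
    exact ⟨⟨h1, h2, h2.natDegree_dvd_iff_dvd_X_pow_card_pow_sub_X.1 (by rw [h3])⟩, h3⟩

theorem card_monicIrreducibles_mul_le [Finite F] {d : ℕ} (hd : 0 < d) :
    (monicIrreducibles F d).card * d ≤ Nat.card F ^ d := by
  have h0 : (X ^ Nat.card F ^ d - X : F[X]) ≠ 0 :=
    FiniteField.X_pow_card_pow_sub_X_ne_zero _ hd.ne' Finite.one_lt_card
  have hdvd : ∏ Q ∈ monicIrreducibles F d, Q ∣ (X ^ Nat.card F ^ d - X : F[X]) := by
    refine Finset.prod_dvd_of_coprime (fun P hP Q hQ hne ↦ ?_) fun Q hQ ↦ ?_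
    · obtain ⟨h1, h2, -⟩ := (mem_monicIrreducibles hd).1 hP
      obtain ⟨h3, h4, -⟩ := (mem_monicIrreducibles hd).1 hQ
      exact isCoprime_of_monic_irreducible h1 h2 h3 h4 hne
    · exact ((mem_monicFactors h0).1 (Finset.mem_filter.1 hQ).1).2.2
  have := natDegree_le_of_dvd hdvd h0
  rwa [natDegree_prod _ _ fun Q hQ ↦ ((mem_monicIrreducibles hd).1 hQ).1.ne_zero,
    Finset.sum_congr rfl fun Q hQ ↦ ((mem_monicIrreducibles hd).1 hQ).2.2, Finset.sum_const,
    smul_eq_mul, FiniteField.X_pow_card_pow_sub_X_natDegree_eq _ hd.ne' Finite.one_lt_card] at this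

end Factors

section Counting
open Polynomial Module UniqueFactorizationMonoid
variable {F V : Type*} [Field F] [AddCommGroup V] [Module F V]

theorem exists_linearEquiv_apply_eq {ι : Type*} [Finite ι] {τ τ' : ι → V}
    (h : LinearIndependent F τ) (h' : LinearIndependent F τ') :
    ∃ φ : V ≃ₗ[F] V, ∀ i, φ (τ i) = τ' i := by
  have : FiniteDimensional F (Submodule.span F (Set.range τ)) :=
    .span_of_finite F (Set.finite_range τ)
  obtain ⟨φ, hφ⟩ := Submodule.exists_linearEquiv_restrict_eq
    ((Basis.span h).equiv (Basis.span h') (Equiv.refl ι))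
  refine ⟨φ, fun i ↦ ?_⟩
  have := hφ (Basis.span h i)
  rw [Basis.equiv_apply, Basis.span_apply, Basis.span_apply] at this
  exact this.symm

theorem exists_linearEquiv_det_eq [FiniteDimensional F V] {U : Submodule F V} (hU : U < ⊤)
    {c : F} (hc : c ≠ 0) :
    ∃ ψ : V ≃ₗ[F] V, (∀ u ∈ U, ψ u = u) ∧ LinearMap.det (ψ : V →ₗ[F] V) = c := by
  obtain ⟨f, hf0, hf⟩ := Submodule.exists_le_ker_of_lt_top U hU
  obtain ⟨u, hu⟩ : ∃ u, f u = c - 1 := by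
    obtain ⟨u, hu⟩ := LinearMap.surjective hf0 (c - 1)
    exact ⟨u, hu⟩
  have hdet : LinearMap.det (LinearMap.transvection f u) = c := by
    rw [LinearMap.transvection.det, hu]; ring
  refine ⟨LinearEquiv.ofIsUnitDet (f := LinearMap.transvection f u) (v := finBasis F V)
    (v' := finBasis F V) ?_, fun w hw ↦ ?_, ?_⟩
  · rw [LinearMap.det_toMatrix, hdet]
    exact hc.isUnit
  · have : f w = 0 := hf hw
    simp [LinearMap.transvection.apply, this]
  · exact hdet

theorem exists_linearEquiv_apply_eq_det_eq_one [FiniteDimensional F V] {d : ℕ}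
    (hd : d < finrank F V)
    {τ τ' : Fin d → V} (h : LinearIndependent F τ) (h' : LinearIndependent F τ') :
    ∃ φ : V ≃ₗ[F] V, LinearMap.det (φ : V →ₗ[F] V) = 1 ∧ ∀ i, φ (τ i) = τ' i := by
  obtain ⟨φ, hφ⟩ := exists_linearEquiv_apply_eq h h'
  have hdet : LinearMap.det (φ : V →ₗ[F] V) ≠ 0 := (LinearEquiv.isUnit_det' φ).ne_zero
  have hU : Submodule.span F (Set.range τ') < ⊤ := by
    refine lt_top_iff_ne_top.2 fun htop ↦ hd.ne' ?_
    rw [← finrank_top F V, ← htop, finrank_span_eq_card h', Fintype.card_fin]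
  obtain ⟨ψ, hψ, hψdet⟩ := exists_linearEquiv_det_eq hU (inv_ne_zero hdet)
  refine ⟨φ.trans ψ, ?_, fun i ↦ ?_⟩
  · rw [LinearEquiv.coe_trans, LinearMap.det_comp, hψdet, inv_mul_cancel₀ hdet]
  · rw [LinearEquiv.trans_apply, hφ, hψ _ (Submodule.subset_span ⟨i, rfl⟩)]

variable (F V) in
/-- The endomorphisms of determinant one. -/
abbrev DetOne : Type _ := {x : End F V // LinearMap.det x = 1}

/-- Pairs of an endomorphism `x` of determinant one and a vector `v` whose annihilator is
generated by the monic polynomial `e`. -/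
abbrev AnnihilatorPair (V : Type*) [AddCommGroup V] [Module F V] (e : F[X]) : Type _ :=
  {p : DetOne F V × V // LinearIndependent F (fun i : Fin e.natDegree ↦ (p.1.1 ^ (i : ℕ)) p.2) ∧
    aeval p.1.1 e p.2 = 0}

theorem AnnihilatorPair.pow_apply_eq {e : F[X]} (he : e.Monic) {p p' : AnnihilatorPair V e}
    (h : ∀ j < e.natDegree, (p.1.1.1 ^ j) p.1.2 = (p'.1.1.1 ^ j) p'.1.2) :
    ∀ j ≤ e.natDegree, (p.1.1.1 ^ j) p.1.2 = (p'.1.1.1 ^ j) p'.1.2 := by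
  intro j hj
  rcases hj.lt_or_eq with hj | rfl
  · exact h j hj
  have key (p : AnnihilatorPair V e) : (p.1.1.1 ^ e.natDegree) p.1.2 =
      - ∑ i ∈ Finset.range e.natDegree, e.coeff i • (p.1.1.1 ^ i) p.1.2 := by
    have := p.2.2
    rw [aeval_eq_sum_range, Finset.sum_range_succ, he.coeff_natDegree, one_smul,
      LinearMap.add_apply, LinearMap.sum_apply, add_comm] at this
    exact eq_neg_of_add_eq_zero_left this
  rw [key, key]
  exact congr_arg _ (Finset.sum_congr rfl fun i hi ↦ by rw [h i (Finset.mem_range.1 hi)])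

theorem exists_injective_annihilatorPair [FiniteDimensional F V] {e : F[X]} (he : e.Monic)
    (S : Set (V ≃ₗ[F] V))
    (hS : ∀ τ τ' : Fin e.natDegree → V, LinearIndependent F τ → LinearIndependent F τ' →
      ∃ φ ∈ S, ∀ i, φ (τ i) = τ' i) :
    ∃ Ψ : AnnihilatorPair V e → End F V, Function.Injective Ψ ∧
      ∀ p, ∃ φ ∈ S, ∃ φ' ∈ S, Ψ p =
        (φ : V →ₗ[F] V) ∘ₗ (φ'.symm : V →ₗ[F] V) ∘ₗ p.1.1.1 ∘ₗ (φ : V →ₗ[F] V) := by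
  rcases isEmpty_or_nonempty (AnnihilatorPair V e) with hE | ⟨⟨p₀⟩⟩
  · exact ⟨isEmptyElim, isEmptyElim, isEmptyElim⟩
  choose! Φ hΦS hΦ using fun τ ↦ hS (fun i ↦ (p₀.1.1.1 ^ (i : ℕ)) p₀.1.2) τ p₀.2.1
  let τ (p : AnnihilatorPair V e) (i : Fin e.natDegree) : V := (p.1.1.1 ^ (i : ℕ)) p.1.2
  let τ' (p : AnnihilatorPair V e) (i : Fin e.natDegree) : V := (p.1.1.1 ^ (i + 1 : ℕ)) p.1.2
  have hτ (p) : LinearIndependent F (τ p) := p.2.1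
  have hτ' (p) : LinearIndependent F (τ' p) := by
    have hker : LinearMap.ker p.1.1.1 = ⊥ := by
      refine (LinearMap.isUnit_iff_ker_eq_bot _).1 ((LinearMap.isUnit_iff_isUnit_det _).2 ?_)
      rw [p.1.1.2]
      exact isUnit_one
    have := (hτ p).map' p.1.1.1 hker
    simpa only [τ, τ', Function.comp_def, pow_succ', Module.End.mul_apply] using this
  refine ⟨fun p ↦ (Φ (τ p) : V →ₗ[F] V) ∘ₗ ((Φ (τ' p)).symm : V →ₗ[F] V) ∘ₗ
      p.1.1.1 ∘ₗ (Φ (τ p) : V →ₗ[F] V), ?_, fun p ↦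
    ⟨_, hΦS _ (hτ p), _, hΦS _ (hτ' p), rfl⟩⟩
  intro p p' hpp
  have h0 (p) (i : Fin e.natDegree) : ((Φ (τ p) : V →ₗ[F] V) ∘ₗ ((Φ (τ' p)).symm : V →ₗ[F] V) ∘ₗ
      p.1.1.1 ∘ₗ (Φ (τ p) : V →ₗ[F] V))
      ((p₀.1.1.1 ^ (i : ℕ)) p₀.1.2) = τ p i := by
    have h1 : p.1.1.1 (τ p i) = τ' p i := by
      simp only [τ, τ', pow_succ', Module.End.mul_apply]
    have h2 : (Φ (τ' p)).symm (τ' p i) = (p₀.1.1.1 ^ (i : ℕ)) p₀.1.2 := by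
      rw [LinearEquiv.symm_apply_eq, hΦ _ (hτ' p)]
    simp [hΦ _ (hτ p), h1, h2]
  have hττ : τ p = τ p' := by
    ext i
    rw [← h0 p i, ← h0 p' i]
    exact congr($hpp _)
  have hpow := AnnihilatorPair.pow_apply_eq he (p := p) (p' := p')
    fun j hj ↦ congr_fun hττ ⟨j, hj⟩
  have hττ' : τ' p = τ' p' := funext fun i ↦ hpow _ i.2
  have hv : p.1.2 = p'.1.2 := hpow 0 (Nat.zero_le _)
  refine Subtype.ext (Prod.ext (Subtype.ext ?_) hv)
  ext w
  have := congr($hpp ((Φ (τ p)).symm w))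
  simpa [hττ, hττ'] using this

theorem finite_end [Finite F] [FiniteDimensional F V] : Finite (End F V) :=
  Module.finite_of_finite F

theorem card_annihilatorPair_le_of_lt [Finite F] [FiniteDimensional F V] {e : F[X]} (he : e.Monic)
    (hd : e.natDegree < finrank F V) :
    Nat.card (AnnihilatorPair V e) ≤ Nat.card (DetOne F V) := by
  have := finite_end (F := F) (V := V)
  obtain ⟨Ψ, hΨ, hform⟩ := exists_injective_annihilatorPair (V := V) he
    {φ | LinearMap.det (φ : V →ₗ[F] V) = 1}
    fun τ τ' h h' ↦ exists_linearEquiv_apply_eq_det_eq_one hd h h'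
  refine Nat.card_le_card_of_injective (fun p ↦ (⟨Ψ p, ?_⟩ : DetOne F V))
    fun p p' h ↦ hΨ (congr_arg Subtype.val h)
  obtain ⟨φ, hφ, φ', hφ', h⟩ := hform p
  rw [Set.mem_ofPred_eq] at hφ hφ'
  have := LinearEquiv.det_symm_mul_det φ'
  rw [hφ', mul_one] at this
  rw [h, LinearMap.det_comp, LinearMap.det_comp, LinearMap.det_comp, hφ, this, p.1.1.2]
  simp

theorem card_annihilatorPair_le [Finite F] [FiniteDimensional F V] [Nontrivial V] {e : F[X]}
    (he : e.Monic) :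
    Nat.card (AnnihilatorPair V e) ≤ Nat.card F * Nat.card (DetOne F V) := by
  have := finite_end (F := F) (V := V)
  obtain ⟨Ψ, hΨ, hform⟩ := exists_injective_annihilatorPair (V := V) he Set.univ
    fun τ τ' h h' ↦ by simpa using exists_linearEquiv_apply_eq h h'
  have hdet (p) : LinearMap.det (Ψ p) ≠ 0 := by
    obtain ⟨φ, hφ, φ', hφ', h⟩ := hform p
    rw [h, LinearMap.det_comp, LinearMap.det_comp, LinearMap.det_comp, p.1.1.2]
    simp [(LinearEquiv.isUnit_det' φ).ne_zero, (LinearEquiv.isUnit_det' φ'.symm).ne_zero]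
  choose! δ _ hδ using fun c : F ↦ exists_linearEquiv_det_eq (c := c)
    (bot_lt_top (α := Submodule F V))
  rw [← Nat.card_prod]
  refine Nat.card_le_card_of_injective (fun p ↦ ((LinearMap.det (Ψ p))⁻¹,
    (⟨(δ (LinearMap.det (Ψ p))⁻¹ : V →ₗ[F] V) ∘ₗ Ψ p, ?_⟩ : DetOne F V))) fun p p' h ↦ hΨ ?_
  · rw [LinearMap.det_comp, hδ _ (inv_ne_zero (hdet p)), inv_mul_cancel₀ (hdet p)]
  · obtain ⟨h1, h2⟩ := Prod.ext_iff.1 h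
    have h3 := congr_arg Subtype.val h2
    simp only at h1 h3
    rw [h1] at h3
    ext w
    exact (δ _).injective congr($h3 w)

theorem exists_annihilator {x : End F V} {v : V} {f : F[X]} (hf : f ≠ 0) (hfv : aeval x f v = 0) :
    ∃ e : F[X], e.Monic ∧ e ∣ f ∧ LinearIndependent F (fun i : Fin e.natDegree ↦ (x ^ (i : ℕ)) v) ∧
      aeval x e v = 0 := by
  classical
  let I : Ideal F[X] :=
    { carrier := {a | aeval x a v = 0}
      add_mem' := fun {a b} (ha : aeval x a v = 0) (hb : aeval x b v = 0) ↦ by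
        change aeval x (a + b) v = 0
        simp [ha, hb]
      zero_mem' := by simp
      smul_mem' := fun c a (ha : aeval x a v = 0) ↦ by
        change aeval x (c * a) v = 0
        simp [ha] }
  have mem_I (a : F[X]) : a ∈ I ↔ aeval x a v = 0 := Iff.rfl
  set e₀ := Submodule.IsPrincipal.generator I
  have hdvd (a : F[X]) : aeval x a v = 0 ↔ e₀ ∣ a := by
    rw [← mem_I, Submodule.IsPrincipal.mem_iff_generator_dvd]
  have he₀ : e₀ ≠ 0 := by
    rintro h
    exact hf (zero_dvd_iff.1 (h ▸ (hdvd f).1 hfv))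
  have hdvd' (a : F[X]) : aeval x a v = 0 ↔ normalize e₀ ∣ a := by rw [hdvd, normalize_dvd_iff]
  refine ⟨normalize e₀, monic_normalize he₀, (hdvd' f).1 hfv, ?_, (hdvd' _).2 dvd_rfl⟩
  rw [Fintype.linearIndependent_iff]
  intro c hc i
  set a : F[X] := ∑ i : Fin (normalize e₀).natDegree, monomial (i : ℕ) (c i)
  have ha : aeval x a v = 0 := by
    rw [← hc, map_sum, LinearMap.sum_apply]
    refine Finset.sum_congr rfl fun j _ ↦ ?_
    rw [aeval_monomial, ← Algebra.smul_def, LinearMap.smul_apply]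
  have ha0 : a = 0 := by
    refine eq_zero_of_dvd_of_degree_lt ((hdvd' a).1 ha) ?_
    rw [degree_eq_natDegree (monic_normalize he₀).ne_zero]
    refine (degree_sum_le _ _).trans_lt ((Finset.sup_lt_iff (WithBot.bot_lt_coe _)).2 fun j _ ↦ ?_)
    exact (degree_monomial_le _ _).trans_lt (by exact_mod_cast j.2)
  have := congr_arg (coeff · (i : ℕ)) ha0
  simpa [a, finsetSum_coeff, coeff_monomial, Fin.val_inj] using this

theorem card_sigma_ker_le [Finite F] [FiniteDimensional F V] {f : F[X]} (hf : f ≠ 0) {c : ℕ}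
    [Finite {e : F[X] // e.Monic ∧ e ∣ f}]
    (hc : ∀ e : F[X], e.Monic → e ∣ f →
      Nat.card (AnnihilatorPair V e) ≤ c * Nat.card (DetOne F V)) :
    Nat.card (Σ x : DetOne F V, LinearMap.ker (aeval x.1 f)) ≤
      Nat.card {e : F[X] // e.Monic ∧ e ∣ f} * (c * Nat.card (DetOne F V)) := by
  have := finite_end (F := F) (V := V)
  have : Finite V := Module.finite_of_finite F
  have := Fintype.ofFinite {e : F[X] // e.Monic ∧ e ∣ f}
  choose e he hef hli hev using fun p : (Σ x : DetOne F V, LinearMap.ker (aeval x.1 f)) ↦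
    exists_annihilator hf p.2.2
  let Ψ (p : Σ x : DetOne F V, LinearMap.ker (aeval x.1 f)) :
      Σ e : {e : F[X] // e.Monic ∧ e ∣ f}, AnnihilatorPair V e.1 :=
    ⟨⟨e p, he p, hef p⟩, ⟨(p.1, p.2), hli p, hev p⟩⟩
  have hΨ : Function.Injective Ψ := by
    intro p p' h
    have h1 := congr_arg (fun s ↦ s.2.1) h
    obtain ⟨x, v⟩ := p
    obtain ⟨x', v'⟩ := p'
    have h2 : x = x' := congr_arg Prod.fst h1
    subst h2
    have h3 : v = v' := Subtype.ext (congr_arg Prod.snd h1)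
    rw [h3]
  refine (Nat.card_le_card_of_injective Ψ hΨ).trans ?_
  rw [Nat.card_sigma, Nat.card_eq_fintype_card]
  refine (Finset.sum_le_card_nsmul _ _ _ fun e _ ↦ hc e.1 e.2.1 e.2.2).trans ?_
  simp

theorem card_le_finrank_ker_mul_le [Finite F] [FiniteDimensional F V] {f : F[X]} (hf : f ≠ 0)
    {c M : ℕ} (hfin : Finite {e : F[X] // e.Monic ∧ e ∣ f})
    (hM : Nat.card {e : F[X] // e.Monic ∧ e ∣ f} ≤ M)
    (hc : ∀ e : F[X], e.Monic → e ∣ f →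
      Nat.card (AnnihilatorPair V e) ≤ c * Nat.card (DetOne F V)) (j : ℕ) :
    Nat.card {x : DetOne F V // j ≤ finrank F (LinearMap.ker (aeval x.1 f))} * Nat.card F ^ j ≤
      M * c * Nat.card (DetOne F V) := by
  have := finite_end (F := F) (V := V)
  have : Finite V := Module.finite_of_finite F
  rw [mul_assoc]
  refine le_trans ?_ ((card_sigma_ker_le hf hc).trans (Nat.mul_le_mul_right _ hM))
  have := Fintype.ofFinite {x : DetOne F V // j ≤ finrank F (LinearMap.ker (aeval x.1 f))}
  let ι (p : Σ x : {x : DetOne F V // j ≤ finrank F (LinearMap.ker (aeval x.1 f))},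
      LinearMap.ker (aeval x.1.1 f)) : Σ x : DetOne F V, LinearMap.ker (aeval x.1 f) :=
    ⟨p.1.1, p.2⟩
  have hι : Function.Injective ι := by
    rintro ⟨⟨x, hx⟩, v⟩ ⟨⟨y, hy⟩, w⟩ h
    obtain ⟨rfl, h2⟩ := Sigma.mk.inj h
    cases h2
    rfl
  refine le_trans ?_ (Nat.card_le_card_of_injective ι hι)
  rw [Nat.card_sigma, Nat.card_eq_fintype_card, ← smul_eq_mul]
  refine Finset.card_nsmul_le_sum _ _ _ fun x _ ↦ ?_
  rw [Module.natCard_eq_pow_finrank (K := F) (V := LinearMap.ker (aeval x.1.1 f))]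
  exact Nat.pow_le_pow_right (Finite.card_pos (α := F)) x.2

end Counting

section Probability
open Polynomial Module UniqueFactorizationMonoid
variable {F V : Type*} [Field F] [AddCommGroup V] [Module F V]

theorem aeval_comp_X_pow (x : End F V) (Q : F[X]) (m k : ℕ) :
    aeval x (Q.comp (X ^ m) ^ k) = aeval (x ^ m) (Q ^ k) := by
  rw [map_pow, aeval_comp, map_pow, map_pow, aeval_X]

theorem finrank_ker_aeval_comp_X_pow (x : End F V) (Q : F[X]) (m k : ℕ) :
    finrank F (LinearMap.ker (aeval x (Q.comp (X ^ m) ^ k))) =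
      finrank F (LinearMap.ker (aeval (x ^ m) (Q ^ k))) := by
  rw [aeval_comp_X_pow]

theorem comp_X_pow_ne_zero {Q : F[X]} (hQ : Irreducible Q) {m : ℕ} (hm : 0 < m) (k : ℕ) :
    Q.comp (X ^ m) ^ k ≠ 0 :=
  pow_ne_zero _ (ne_zero_of_natDegree_gt (n := 0) (by simp [natDegree_comp, hQ.natDegree_pos, hm]))

variable [FiniteDimensional F V]

theorem natDegree_le_finrank_ker {y : End F V} {Q : F[X]} (hQ : Irreducible Q)
    (h : Q ∣ minpoly F y) : Q.natDegree ≤ finrank F (LinearMap.ker (aeval y Q)) := by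
  have hbot : LinearMap.ker (aeval y Q) ≠ ⊥ := by
    intro hbot
    obtain ⟨c, hc⟩ := h
    have hc0 : aeval y c = 0 := by
      ext v
      have : aeval y c v ∈ LinearMap.ker (aeval y Q) := by
        rw [LinearMap.mem_ker, ← Module.End.mul_apply, ← map_mul, ← hc, minpoly.aeval]
        rfl
      simpa [hbot] using this
    have hmin := minpoly.ne_zero (IsIntegral.of_finite F y)
    obtain ⟨b, hb⟩ := minpoly.dvd F y hc0
    rw [hc] at hmin
    have hcc : c = c * (Q * b) := by rw [← mul_assoc, mul_comm c, ← hc, ← hb]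
    have : Q * b = 1 := (mul_eq_left₀ (right_ne_zero_of_mul hmin)).1 hcc.symm
    exact hQ.not_isUnit (IsUnit.of_mul_eq_one _ this)
  have := finrank_add_natDegree_le (x := y) (U := ⊥) (by simp) (ker_aeval_invariant y Q)
    (bot_lt_iff_ne_bot.2 hbot) hQ fun u hu ↦ by simpa using hu
  simpa using this

/-- The monic irreducible factors of the minimal polynomial of `x ^ m` of degree less than
`dim V / m`. -/
noncomputable def smallFactors (m : ℕ) (x : End F V) : Finset F[X] :=
  (monicFactors (minpoly F (x ^ m))).filter fun Q ↦ m * Q.natDegree < finrank F V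

theorem card_monicFactors_le [Nontrivial V] (m : ℕ) (x : End F V) :
    (monicFactors (minpoly F (x ^ m))).card ≤ (smallFactors m x).card + m := by
  set n := finrank F V
  have hn : 0 < n := finrank_pos
  have hmin := minpoly.ne_zero (IsIntegral.of_finite F (x ^ m))
  rw [← Finset.card_filter_add_card_filter_not (s := monicFactors (minpoly F (x ^ m)))
    (fun Q ↦ m * Q.natDegree < finrank F V)]
  refine Nat.add_le_add_left (Nat.le_of_mul_le_mul_right ?_ hn) _
  have hsum : ∑ Q ∈ monicFactors (minpoly F (x ^ m)), Q.natDegree ≤ n := by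
    rw [← natDegree_prod _ _ fun Q hQ ↦ ((mem_monicFactors hmin).1 hQ).1.ne_zero]
    have hdvd : ∏ Q ∈ monicFactors (minpoly F (x ^ m)), Q ∣ minpoly F (x ^ m) := by
      refine Finset.prod_dvd_of_coprime (fun P hP Q hQ hne ↦ ?_) fun Q hQ ↦
        ((mem_monicFactors hmin).1 hQ).2.2
      obtain ⟨h1, h2, -⟩ := (mem_monicFactors hmin).1 hP
      obtain ⟨h3, h4, -⟩ := (mem_monicFactors hmin).1 hQ
      exact isCoprime_of_monic_irreducible h1 h2 h3 h4 hne
    refine (natDegree_le_of_dvd (hdvd.trans (LinearMap.minpoly_dvd_charpoly _))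
      (LinearMap.charpoly_monic _).ne_zero).trans_eq ?_
    rw [LinearMap.charpoly_natDegree]
  calc _ ≤ ∑ Q ∈ (monicFactors (minpoly F (x ^ m))).filter
        (fun Q ↦ ¬ m * Q.natDegree < finrank F V), m * Q.natDegree := by
        rw [← smul_eq_mul]
        exact Finset.card_nsmul_le_sum _ _ _ fun Q hQ ↦ not_lt.1 (Finset.mem_filter.1 hQ).2
    _ ≤ ∑ Q ∈ monicFactors (minpoly F (x ^ m)), m * Q.natDegree :=
        Finset.sum_le_sum_of_subset (Finset.filter_subset _ _)
    _ ≤ m * n := by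
        rw [← Finset.mul_sum]
        exact Nat.mul_le_mul_left m hsum

variable [Finite F]

theorem card_le_finrank_ker_pow_mul_le [Nontrivial V] {Q : F[X]} (hQ : Irreducible Q) {m : ℕ}
    (hm : 0 < m) (k j : ℕ) :
    Nat.card {x : DetOne F V // j ≤ finrank F (LinearMap.ker (aeval (x.1 ^ m) (Q ^ k)))} *
      Nat.card F ^ j ≤ (m * k + 1) ^ m * Nat.card F * Nat.card (DetOne F V) := by
  obtain ⟨h1, h2⟩ := card_monic_dvd_le hQ hm k
  have key := card_le_finrank_ker_mul_le (V := V) (comp_X_pow_ne_zero hQ hm k) h1 h2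
    (fun e he _ ↦ card_annihilatorPair_le he) j
  simpa only [finrank_ker_aeval_comp_X_pow] using key

theorem card_le_finrank_ker_mul_le_of_lt {Q : F[X]} (hQ : Irreducible Q) {m : ℕ}
    (hm : 0 < m) (hlt : m * Q.natDegree < finrank F V) (j : ℕ) :
    Nat.card {x : DetOne F V // j ≤ finrank F (LinearMap.ker (aeval (x.1 ^ m) Q))} *
      Nat.card F ^ j ≤ (m + 1) ^ m * Nat.card (DetOne F V) := by
  obtain ⟨h1, h2⟩ := card_monic_dvd_le hQ hm 1
  have key := card_le_finrank_ker_mul_le (V := V) (c := 1) (comp_X_pow_ne_zero hQ hm 1) h1 h2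
    (fun e he hd ↦ ?_) j
  · have h (x : End F V) : finrank F (LinearMap.ker (aeval x (Q.comp (X ^ m) ^ 1))) =
        finrank F (LinearMap.ker (aeval (x ^ m) Q)) := by
      rw [finrank_ker_aeval_comp_X_pow, pow_one]
    simpa only [h, mul_one] using key
  · rw [one_mul]
    refine card_annihilatorPair_le_of_lt he ((natDegree_le_of_dvd hd
      (comp_X_pow_ne_zero hQ hm 1)).trans_lt ?_)
    rwa [pow_one, natDegree_comp, natDegree_X_pow, mul_comm]

theorem sum_Ioc_half_pow_le (D n : ℕ) : ∑ d ∈ Finset.Ioc D n, (1 / 2 : ℝ) ^ d ≤ (1 / 2) ^ D := by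
  rcases le_total D n with h | h
  · have : ∑ d ∈ Finset.Ioc D n, (1 / 2 : ℝ) ^ d + (1 / 2) ^ n = (1 / 2) ^ D := by
      induction n, h using Nat.le_induction with
      | base => simp
      | succ n h ih =>
        rw [Finset.sum_Ioc_succ_top h, ← ih, pow_succ]
        ring
    linarith [pow_pos (by norm_num : (0 : ℝ) < 1 / 2) n]
  · rw [Finset.Ioc_eq_empty_of_le h]
    simp

variable (F V) in
/-- The `x` for which the kernel of some `Q(x ^ m) ^ k` with `Q` irreducible of degree greater
than `D` has dimension at least `k * deg Q`. -/
def largeKernel (m k D : ℕ) : Set (DetOne F V) :=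
  {x | ∃ Q : F[X], Q.Monic ∧ Irreducible Q ∧ D < Q.natDegree ∧
    k * Q.natDegree ≤ finrank F (LinearMap.ker (aeval (x.1 ^ m) (Q ^ k)))}

theorem ncard_largeKernel_le [Nontrivial V] {m : ℕ} (hm : 0 < m) (j D : ℕ) :
    ((largeKernel F V m (j + 2) D).ncard : ℝ) ≤
      2 * (m * (j + 2) + 1) ^ m * (1 / 2) ^ j * (1 / 2) ^ D * Nat.card (DetOne F V) := by
  have := finite_end (F := F) (V := V)
  set q := Nat.card F
  have hq : (2 : ℝ) ≤ q := by exact_mod_cast Finite.one_lt_card (α := F)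
  set n := finrank F V
  set T := Nat.card (DetOne F V)
  set M : ℝ := (m * (j + 2) + 1) ^ m
  let A (Q : F[X]) : Set (DetOne F V) := {x | (j + 2) * Q.natDegree ≤
    finrank F (LinearMap.ker (aeval (x.1 ^ m) (Q ^ (j + 2))))}
  have hsub : largeKernel F V m (j + 2) D ⊆
      ⋃ d ∈ Finset.Ioc D n, ⋃ Q ∈ monicIrreducibles F d, A Q := by
    rintro x ⟨Q, h1, h2, h3, h4⟩
    simp only [Set.mem_iUnion]
    refine ⟨Q.natDegree, Finset.mem_Ioc.2 ⟨h3, ?_⟩, Q,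
      (mem_monicIrreducibles h2.natDegree_pos).2 ⟨h1, h2, rfl⟩, h4⟩
    exact (Nat.le_mul_of_pos_left _ (by omega)).trans (h4.trans (Submodule.finrank_le _))
  have hA (d : ℕ) (hd : 0 < d) (Q : F[X]) (hQ : Q ∈ monicIrreducibles F d) :
      ((A Q).ncard : ℝ) * q ^ ((j + 2) * d) ≤ M * q * T := by
    obtain ⟨h1, h2, rfl⟩ := (mem_monicIrreducibles hd).1 hQ
    have h := (Nat.cast_le (α := ℝ)).2
      (card_le_finrank_ker_pow_mul_le (V := V) h2 hm (j + 2) ((j + 2) * Q.natDegree))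
    push_cast at h
    rwa [← Nat.card_coe_set_eq]
  have hd' (d : ℕ) (hd : d ∈ Finset.Ioc D n) :
      ((⋃ Q ∈ monicIrreducibles F d, A Q).ncard : ℝ) ≤ 2 * M * (1 / 2) ^ j * T * (1 / 2) ^ d := by
    have hd0 : 0 < d := by rw [Finset.mem_Ioc] at hd; omega
    have hcard : ((monicIrreducibles F d).card : ℝ) ≤ q ^ d := by
      exact_mod_cast (Nat.le_mul_of_pos_right _ hd0).trans
        (card_monicIrreducibles_mul_le (F := F) hd0)
    calc ((⋃ Q ∈ monicIrreducibles F d, A Q).ncard : ℝ)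
        ≤ ∑ Q ∈ monicIrreducibles F d, ((A Q).ncard : ℝ) := by
          exact_mod_cast Finset.set_ncard_biUnion_le _ _
      _ ≤ ∑ Q ∈ monicIrreducibles F d, M * q * T / q ^ ((j + 2) * d) :=
          Finset.sum_le_sum fun Q hQ ↦ (le_div_iff₀ (by positivity)).2 (hA d hd0 Q hQ)
      _ = (monicIrreducibles F d).card * (M * q * T / q ^ ((j + 2) * d)) := by
          rw [Finset.sum_const, nsmul_eq_mul]
      _ ≤ q ^ d * (M * q * T / q ^ ((j + 2) * d)) := by gcongr
      _ = M * T * (q ^ (d + 1) / q ^ ((j + 2) * d)) := by ring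
      _ ≤ M * T * (2 * (1 / 2) ^ j * (1 / 2) ^ d) := by
          gcongr
          obtain ⟨d, rfl⟩ : ∃ d', d = d' + 1 := ⟨d - 1, by omega⟩
          rw [show (j + 2) * (d + 1) = (d + 1 + 1) + (j + d + j * d) by ring, pow_add _ (d + 1 + 1),
            div_mul_cancel_left₀ (by positivity)]
          rw [show (2 : ℝ) * (1 / 2) ^ j * (1 / 2) ^ (d + 1) = (2 ^ (j + d))⁻¹ by
            rw [pow_succ, pow_add, one_div, inv_pow, inv_pow]; field_simp]
          gcongr
          calc (2 : ℝ) ^ (j + d) ≤ q ^ (j + d) := by gcongr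
            _ ≤ q ^ (j + d + j * d) := pow_le_pow_right₀ (by linarith) (by omega)
      _ = 2 * M * (1 / 2) ^ j * T * (1 / 2) ^ d := by ring
  calc ((largeKernel F V m (j + 2) D).ncard : ℝ)
      ≤ (⋃ d ∈ Finset.Ioc D n, ⋃ Q ∈ monicIrreducibles F d, A Q).ncard := by
        exact_mod_cast Set.ncard_le_ncard hsub (Set.toFinite _)
    _ ≤ ∑ d ∈ Finset.Ioc D n, ((⋃ Q ∈ monicIrreducibles F d, A Q).ncard : ℝ) := by
        exact_mod_cast Finset.set_ncard_biUnion_le _ _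
    _ ≤ ∑ d ∈ Finset.Ioc D n, 2 * M * (1 / 2) ^ j * T * (1 / 2) ^ d := Finset.sum_le_sum hd'
    _ = 2 * M * (1 / 2) ^ j * T * ∑ d ∈ Finset.Ioc D n, (1 / 2 : ℝ) ^ d := by rw [Finset.mul_sum]
    _ ≤ 2 * M * (1 / 2) ^ j * T * (1 / 2) ^ D := by
        gcongr
        exact sum_Ioc_half_pow_le D n
    _ = _ := by ring

theorem sum_card_smallFactors_le [Fintype (DetOne F V)] {m : ℕ} (hm : 0 < m) :
    ∑ x : DetOne F V, ((smallFactors m x.1).card : ℝ) ≤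
      (m + 1) ^ m * (1 + Real.log (finrank F V)) * Nat.card (DetOne F V) := by
  classical
  set q := Nat.card F
  have hq : (2 : ℝ) ≤ q := by exact_mod_cast Finite.one_lt_card (α := F)
  set n := finrank F V
  set T := Nat.card (DetOne F V)
  set M : ℝ := (m + 1) ^ m
  let A (Q : F[X]) : Set (DetOne F V) :=
    {x | Q.natDegree ≤ finrank F (LinearMap.ker (aeval (x.1 ^ m) Q))}
  let I : Finset (Σ _ : ℕ, F[X]) := ((Finset.Icc 1 n).filter fun d ↦ m * d < n).sigma
    fun d ↦ monicIrreducibles F d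
  have hle (x : DetOne F V) : (smallFactors m x.1).card ≤
      ∑ p ∈ I, if x ∈ A p.2 then 1 else 0 := by
    rw [← Finset.card_filter]
    refine Finset.card_le_card_of_injOn (fun Q ↦ ⟨Q.natDegree, Q⟩) ?_ fun P _ Q _ h ↦ ?_
    · intro Q hQ
      obtain ⟨hQ1, hQ2⟩ := Finset.mem_filter.1 hQ
      obtain ⟨h1, h2, h3⟩ := (mem_monicFactors (minpoly.ne_zero (IsIntegral.of_finite F _))).1 hQ1
      have hdeg := h2.natDegree_pos
      simp only [I, Finset.coe_filter, Set.mem_ofPred_eq, Finset.mem_sigma, Finset.mem_filter,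
        Finset.mem_Icc]
      refine ⟨⟨⟨⟨hdeg, ?_⟩, hQ2⟩, (mem_monicIrreducibles hdeg).2 ⟨h1, h2, rfl⟩⟩,
        natDegree_le_finrank_ker h2 h3⟩
      exact (natDegree_le_finrank_ker h2 h3).trans (Submodule.finrank_le _)
    · exact eq_of_heq (Sigma.mk.inj h).2
  calc ∑ x : DetOne F V, ((smallFactors m x.1).card : ℝ)
      ≤ ∑ x : DetOne F V, ∑ p ∈ I, if x ∈ A p.2 then (1 : ℝ) else 0 :=
        Finset.sum_le_sum fun x _ ↦ by exact_mod_cast hle x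
    _ = ∑ p ∈ I, ((A p.2).ncard : ℝ) := by
        rw [Finset.sum_comm]
        refine Finset.sum_congr rfl fun p _ ↦ ?_
        rw [Finset.sum_boole, Set.ncard_eq_toFinset_card', Set.toFinset_card, Fintype.card_subtype]
    _ ≤ ∑ p ∈ I, M * T / q ^ p.1 := by
        refine Finset.sum_le_sum fun p hp ↦ (le_div_iff₀ (by positivity)).2 ?_
        obtain ⟨d, Q⟩ := p
        simp only [I, Finset.mem_sigma, Finset.mem_filter, Finset.mem_Icc] at hp
        obtain ⟨-, h2, h3⟩ := (mem_monicIrreducibles (by omega)).1 hp.2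
        obtain rfl := h3
        have h := (Nat.cast_le (α := ℝ)).2
          (card_le_finrank_ker_mul_le_of_lt (V := V) h2 hm hp.1.2 Q.natDegree)
        push_cast at h
        rwa [← Nat.card_coe_set_eq]
    _ = ∑ d ∈ (Finset.Icc 1 n).filter fun d ↦ m * d < n,
          (monicIrreducibles F d).card * (M * T / q ^ d) := by
        rw [Finset.sum_sigma]
        simp
    _ ≤ ∑ d ∈ (Finset.Icc 1 n).filter fun d ↦ m * d < n, M * T * (d : ℝ)⁻¹ := by
        refine Finset.sum_le_sum fun d hd ↦ ?_
        have hd0 : 0 < d := by simp only [Finset.mem_filter, Finset.mem_Icc] at hd; omega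
        have hc : ((monicIrreducibles F d).card : ℝ) * d ≤ q ^ d := by
          exact_mod_cast card_monicIrreducibles_mul_le (F := F) hd0
        have hd1 : (0 : ℝ) < d := by exact_mod_cast hd0
        calc ((monicIrreducibles F d).card : ℝ) * (M * T / q ^ d)
            ≤ (q ^ d / d) * (M * T / q ^ d) := by
              gcongr
              exact (le_div_iff₀ hd1).2 hc
          _ = M * T * (d : ℝ)⁻¹ := by field_simp
    _ ≤ ∑ d ∈ Finset.Icc 1 n, M * T * (d : ℝ)⁻¹ :=
        Finset.sum_le_sum_of_subset_of_nonneg (Finset.filter_subset _ _)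
          fun d _ _ ↦ by positivity
    _ = M * T * (harmonic n : ℝ) := by
        rw [← Finset.mul_sum, harmonic_eq_sum_Icc]
        push_cast
        rfl
    _ ≤ M * T * (1 + Real.log n) := by
        gcongr
        exact harmonic_le_one_add_log n
    _ = _ := by ring

variable (F V) in
/-- The `x` for which `x ^ m` has many factors of small degree in its minimal polynomial. -/
def manyFactors (m : ℕ) (R : ℝ) : Set (DetOne F V) := {x | R < (smallFactors m x.1).card}

theorem ncard_manyFactors_mul_le {m : ℕ} (hm : 0 < m) (R : ℝ) :
    (manyFactors F V m R).ncard * R ≤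
      (m + 1) ^ m * (1 + Real.log (finrank F V)) * Nat.card (DetOne F V) := by
  classical
  have := finite_end (F := F) (V := V)
  have := Fintype.ofFinite (DetOne F V)
  refine le_trans ?_ (sum_card_smallFactors_le hm)
  rw [Set.ncard_eq_toFinset_card', ← nsmul_eq_mul]
  refine (Finset.card_nsmul_le_sum _ (fun x : DetOne F V ↦ ((smallFactors m x.1).card : ℝ)) _
    fun x hx ↦ ?_).trans (Finset.sum_le_sum_of_subset_of_nonneg (Finset.subset_univ _)
      fun x _ _ ↦ by positivity)
  exact (Set.mem_toFinset.1 hx).le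

theorem card_pow_eq_pow_le [Nontrivial V] {m j D : ℕ} (hm : 0 < m) {R : ℝ} {x : DetOne F V}
    (h1 : x ∉ largeKernel F V m (j + 2) 0) (h2 : x ∉ largeKernel F V m 2 D)
    (h3 : x ∉ manyFactors F V m R) :
    (Nat.card {h : End F V // h ^ m = x.1 ^ m} : ℝ) ≤
      (Nat.card F : ℝ) ^ (((m + ((j + 2) * D) ^ 2 : ℕ) : ℝ) * (R + m)) := by
  have hq : (1 : ℝ) ≤ Nat.card F := by exact_mod_cast Finite.card_pos (α := F)
  have h := card_pow_eq_le_of_finrank_lt (x := x.1 ^ m) (k := j + 1) (D := D) hm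
    (fun Q hQm hQ ↦ not_le.1 fun h ↦ h1 ⟨Q, hQm, hQ, hQ.natDegree_pos, h⟩)
    (fun Q hQm hQ hD ↦ not_le.1 fun h ↦ h2 ⟨Q, hQm, hQ, hD, h⟩)
  have h3' : ((smallFactors m x.1).card : ℝ) ≤ R := not_lt.1 h3
  have h4 : ((monicFactors (minpoly F (x.1 ^ m))).card : ℝ) ≤ R + m :=
    le_trans (by exact_mod_cast card_monicFactors_le m x.1) (add_le_add_left h3' _)
  rw [← pow_mul] at h
  have h' : (Nat.card {h : End F V // h ^ m = x.1 ^ m} : ℝ) ≤ (Nat.card F : ℝ) ^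
      ((m + ((j + 2) * D) ^ 2) * (monicFactors (minpoly F (x.1 ^ m))).card) := by
    exact_mod_cast h
  refine h'.trans ?_
  rw [← Real.rpow_natCast]
  refine Real.rpow_le_rpow_of_exponent_le hq ?_
  rw [Nat.cast_mul]
  gcongr

theorem exists_poly_mul_half_pow_le (m : ℕ) {δ : ℝ} (hδ : 0 < δ) :
    ∃ j : ℕ, 2 * ((m : ℝ) * (j + 2) + 1) ^ m * (1 / 2) ^ j ≤ δ := by
  have h := (tendsto_pow_const_mul_const_pow_of_abs_lt_one m
    (r := (1 / 2 : ℝ)) (by norm_num [abs_of_pos])).const_mul (2 * (3 * m + 1 : ℝ) ^ m)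
  rw [mul_zero] at h
  obtain ⟨j, hj, hj0⟩ := ((h.eventually_le_const hδ).and (Filter.eventually_ge_atTop 1)).exists
  refine ⟨j, le_trans ?_ hj⟩
  have hj1 : (1 : ℝ) ≤ j := by exact_mod_cast hj0
  rw [← mul_assoc, mul_assoc 2 _ ((j : ℝ) ^ m), ← mul_pow]
  gcongr
  nlinarith [(Nat.cast_nonneg m : (0 : ℝ) ≤ m)]

theorem mul_add_lt_mul_pow_four {C K M L : ℝ} (hC : 0 ≤ C) (hK : 0 ≤ K) (hM : 0 ≤ M)
    (hL : 1 / 2 ≤ L) : C * (K * (1 + L) + M) < (C * (24 * K + 16 * M) + 1) * L ^ 4 := by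
  have h3 : (1 / 2 : ℝ) ^ 3 ≤ L ^ 3 := by gcongr
  have h4 : (1 / 2 : ℝ) ^ 4 ≤ L ^ 4 := by gcongr
  have hL4 : L ≤ 8 * L ^ 4 := by nlinarith
  have h1 : K * (1 + L) ≤ K * (24 * L ^ 4) := by
    gcongr
    linarith
  have h2 : M * 1 ≤ M * (16 * L ^ 4) := by
    gcongr
    linarith
  have h : C * (K * (1 + L) + M) ≤ C * (K * (24 * L ^ 4) + M * (16 * L ^ 4)) := by
    gcongr
    linarith
  linarith

theorem exists_ncard_le_and_card_pow_eq_lt {m : ℕ} (hm : 0 < m) {ε : ℝ} (hε : 0 < ε) :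
    ∃ l : ℝ, ∀ (F V : Type) [Field F] [AddCommGroup V] [Module F V] [Finite F]
      [FiniteDimensional F V], 2 ≤ finrank F V → ∃ S : Set (DetOne F V),
        (S.ncard : ℝ) ≤ ε * Nat.card (DetOne F V) ∧ ∀ x ∉ S,
          (Nat.card {h : End F V // h ^ m = x.1 ^ m} : ℝ) <
            (Nat.card F : ℝ) ^ (l * Real.log (finrank F V) ^ 4) := by
  have hε3 : 0 < ε / 3 := by positivity
  obtain ⟨j, hj⟩ := exists_poly_mul_half_pow_le m hε3
  obtain ⟨D, hD⟩ := exists_pow_lt_of_lt_one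
    (show 0 < ε / 3 / (2 * ((m : ℝ) * 2 + 1) ^ m) by positivity) (show (1 / 2 : ℝ) < 1 by norm_num)
  rw [lt_div_iff₀' (by positivity)] at hD
  set C : ℕ := m + ((j + 2) * D) ^ 2
  set K : ℝ := 3 * (m + 1) ^ m / ε
  refine ⟨C * (24 * K + 16 * m) + 1, fun F V _ _ _ _ _ hn ↦ ?_⟩
  have : Nontrivial V := Module.nontrivial_of_finrank_pos (R := F) (by omega)
  set n := finrank F V
  have hn' : (2 : ℝ) ≤ n := by exact_mod_cast hn
  have hL : 1 / 2 ≤ Real.log n :=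
    (by linarith [Real.log_two_gt_d9] : 1 / 2 ≤ Real.log 2).trans
      (Real.log_le_log (by norm_num) hn')
  set R : ℝ := K * (1 + Real.log n) with hR
  have hR0 : 0 < R := by positivity
  set T := Nat.card (DetOne F V)
  refine ⟨largeKernel F V m (j + 2) 0 ∪ largeKernel F V m 2 D ∪ manyFactors F V m R, ?_,
    fun x hx ↦ ?_⟩
  · have h1 : ((largeKernel F V m (j + 2) 0).ncard : ℝ) ≤ ε / 3 * T := by
      refine (ncard_largeKernel_le hm j 0).trans ?_
      rw [pow_zero, mul_one]
      gcongr
    have h2 : ((largeKernel F V m 2 D).ncard : ℝ) ≤ ε / 3 * T := by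
      have := ncard_largeKernel_le (F := F) (V := V) hm 0 D
      simp only [pow_zero, mul_one, Nat.cast_zero, zero_add] at this
      refine this.trans ?_
      gcongr
    have h3 : ((manyFactors F V m R).ncard : ℝ) ≤ ε / 3 * T := by
      refine le_of_mul_le_mul_right ((ncard_manyFactors_mul_le hm R).trans_eq ?_) hR0
      simp only [hR, K]
      field_simp
      exact mul_comm _ _
    have h4 := Set.ncard_union_le (largeKernel F V m (j + 2) 0 ∪ largeKernel F V m 2 D)
      (manyFactors F V m R)
    have h5 := Set.ncard_union_le (largeKernel F V m (j + 2) 0) (largeKernel F V m 2 D)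
    have h6 : ((largeKernel F V m (j + 2) 0 ∪ largeKernel F V m 2 D ∪
        manyFactors F V m R).ncard : ℝ) ≤ (largeKernel F V m (j + 2) 0).ncard +
          (largeKernel F V m 2 D).ncard + (manyFactors F V m R).ncard := by
      exact_mod_cast h4.trans (Nat.add_le_add_right h5 _)
    linarith
  · simp only [Set.mem_union, not_or] at hx
    refine (card_pow_eq_pow_le hm hx.1.1 hx.1.2 hx.2).trans_lt
      (Real.rpow_lt_rpow_of_exponent_lt ?_ ?_)
    · exact_mod_cast Finite.one_lt_card (α := F)
    · exact mul_add_lt_mul_pow_four (Nat.cast_nonneg _) (by positivity) (Nat.cast_nonneg _) hL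

/-- Matrices of determinant one, seen as endomorphisms. -/
noncomputable def specialLinearEquivDetOne (F : Type*) [Field F] (n : ℕ) :
    Matrix.SpecialLinearGroup (Fin n) F ≃ DetOne F (Fin n → F) :=
  Matrix.toLin'.toEquiv.subtypeEquiv fun A ↦ by
    rw [LinearEquiv.coe_toEquiv, LinearMap.det_toLin']

theorem card_pow_eq_le_card_specialLinearEquivDetOne {F : Type*} [Field F] [Finite F] (n m : ℕ)
    (g : Matrix.SpecialLinearGroup (Fin n) F) :
    Nat.card {h : Matrix.SpecialLinearGroup (Fin n) F // h ^ m = g ^ m} ≤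
      Nat.card {h : End F (Fin n → F) // h ^ m = (specialLinearEquivDetOne F n g).1 ^ m} := by
  have := finite_end (F := F) (V := Fin n → F)
  refine Nat.card_le_card_of_injective
    (fun h ↦ ⟨(specialLinearEquivDetOne F n h.1).1, ?_⟩) fun h k hhk ↦ ?_
  · change Matrix.toLin' h.1.1 ^ m = Matrix.toLin' g.1 ^ m
    rw [← Matrix.toLin'_pow, ← Matrix.toLin'_pow, ← Matrix.SpecialLinearGroup.coe_pow,
      ← Matrix.SpecialLinearGroup.coe_pow, h.2]
  · have hv := congrArg Subtype.val hhk
    exact Subtype.ext ((specialLinearEquivDetOne F n).injective (Subtype.ext hv))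

end Probability

/-- For every positive integer `m` and every `ε > 0` there exists `l` such that for every
finite field `F_q` and `n ≥ 2`, there is a subset `S ⊆ SL_n(F_q)` with
`|S| ≤ ε |SL_n(F_q)|` such that every `g ∉ S` has at most `q^{l (log n)^4}` elements `h`
with `h^m = g^m`. -/
theorem power_fibers_bound (m : ℕ) (hm : 0 < m) (ε : ℝ) (hε : 0 < ε) :
    ∃ l : ℝ, ∀ (F : Type) [Field F] [Fintype F] (n : ℕ), 2 ≤ n →
      ∃ S : Set (Matrix.SpecialLinearGroup (Fin n) F),
        (S.ncard : ℝ) ≤ ε * (Nat.card (Matrix.SpecialLinearGroup (Fin n) F) : ℝ) ∧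
        ∀ g ∉ S,
          (Nat.card {h : Matrix.SpecialLinearGroup (Fin n) F // h ^ m = g ^ m} : ℝ) <
            (Fintype.card F : ℝ) ^ (l * Real.log n ^ 4) := by
  obtain ⟨l, hl⟩ := exists_ncard_le_and_card_pow_eq_lt hm hε
  refine ⟨l, fun F _ _ n hn ↦ ?_⟩
  obtain ⟨S, hS, hS'⟩ := hl F (Fin n → F) (by rwa [Module.finrank_fin_fun])
  refine ⟨specialLinearEquivDetOne F n ⁻¹' S, ?_, fun g hg ↦ ?_⟩
  · rw [Set.ncard_preimage_of_injective_subset_range (specialLinearEquivDetOne F n).injective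
      (by simp), Nat.card_congr (specialLinearEquivDetOne F n)]
    exact hS
  · have h := hS' _ hg
    rw [Module.finrank_fin_fun, Nat.card_eq_fintype_card (α := F)] at h
    exact lt_of_le_of_lt (by exact_mod_cast card_pow_eq_le_card_specialLinearEquivDetOne n m g) h
end

section
/- Let d ≥ 1 and let w ≠ 1 be an admissible word in the free group F_d in which all d variables occur: every variable x_i occurs in the reduced expression of w exactly once with exponent 1 and exactly once with exponent −1. Then there exists a positive integer k (depending only on w) such that for every finite group G and every g ∈ G, the number N_w(g) of d-tuples (g1, …, g_d) ∈ G^d with w(g1, …, g_d) = g equals |G|^{d−1} · ∑_{χ ∈ Irr(G)} χ(g) / χ(1)^k, where Irr(G) is the set of irreducible complex characters of G. -/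
open CategoryTheory

/-- The formal inverse of a letter. -/
def invLetter {α : Type*} (a : α × Bool) : α × Bool := (a.1, !a.2)

/-- A list of letters without repetition and closed under formal inversion of letters. -/
def IsBalanced {α : Type*} (L : List (α × Bool)) : Prop :=
  L.Nodup ∧ ∀ a ∈ L, invLetter a ∈ L

section Words

variable {α : Type*}

@[simp] lemma invLetter_invLetter (a : α × Bool) : invLetter (invLetter a) = a := by
  simp [invLetter]

lemma invLetter_ne (a : α × Bool) : invLetter a ≠ a := by
  intro h
  have := congrArg Prod.snd h
  simp [invLetter] at this

lemma exists_cancelling_or_interleaved_of_eq_append {L : List (α × Bool)} (hL : IsBalanced L)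
    (n : ℕ) :
    ∀ (P M T : List (α × Bool)) (a : α × Bool), M.length = n →
      L = P ++ a :: (M ++ invLetter a :: T) →
      (∃ P T a, L = P ++ a :: invLetter a :: T) ∨
      (∃ P Q R S T a b, L = P ++ a :: (Q ++ b :: (R ++ invLetter a ::
        (S ++ invLetter b :: T)))) := by
  induction n using Nat.strong_induction_on with
  | _ n ih =>
    intro P M T a hM h
    cases M with
    | nil => exact Or.inl ⟨P, T, a, by simpa using h⟩
    | cons b M =>
      have hb : invLetter b ∈ L := hL.2 b (by simp [h])
      have hnd := hL.1
      rw [h] at hb hnd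
      simp only [List.mem_append, List.mem_cons, List.cons_append] at hb
      rcases hb with hb | hb | hb | hb | hb | hb
      · obtain ⟨P₁, P₂, rfl⟩ := List.append_of_mem hb
        exact Or.inr ⟨P₁, P₂, [], M, T, invLetter b, a, by simp [h]⟩
      · rw [← hb] at hnd
        simp [List.nodup_append] at hnd
      · exact absurd hb (invLetter_ne b)
      · obtain ⟨M₁, M₂, rfl⟩ := List.append_of_mem hb
        refine ih M₁.length ?_ (P ++ [a]) M₁ (M₂ ++ invLetter a :: T) b rfl (by simp [h])
        simp at hM
        omega
      · have : b = a := by simpa using congrArg invLetter hb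
        rw [this] at hnd
        simp [List.nodup_append] at hnd
      · obtain ⟨T₁, T₂, rfl⟩ := List.append_of_mem hb
        exact Or.inr ⟨P, [], M, T₁, T₂, a, b, by simp [h]⟩

/-- A nonempty balanced word has a cancelling pair of adjacent letters or two interleaved pairs of
mutually inverse letters. -/
lemma IsBalanced.exists_cancelling_or_interleaved {L : List (α × Bool)} (hL : IsBalanced L)
    (hne : L ≠ []) :
    (∃ P T a, L = P ++ a :: invLetter a :: T) ∨
      (∃ P Q R S T a b, L = P ++ a :: (Q ++ b :: (R ++ invLetter a ::
        (S ++ invLetter b :: T)))) := by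
  obtain ⟨a, L', rfl⟩ := List.exists_cons_of_ne_nil hne
  have ha := hL.2 a (by simp)
  rw [List.mem_cons] at ha
  obtain ⟨M, T, rfl⟩ := List.append_of_mem (ha.resolve_left (invLetter_ne a))
  exact exists_cancelling_or_interleaved_of_eq_append hL M.length [] M T a rfl rfl

lemma IsBalanced.of_perm {L L' : List (α × Bool)} (hL : IsBalanced L) (h : L.Perm L') :
    IsBalanced L' :=
  ⟨h.nodup_iff.1 hL.1, fun a ha => h.mem_iff.1 (hL.2 a (h.mem_iff.2 ha))⟩

lemma IsBalanced.of_cons_cons {L : List (α × Bool)} {a : α × Bool}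
    (hL : IsBalanced (a :: invLetter a :: L)) : IsBalanced L := by
  obtain ⟨hnd, hcl⟩ := hL
  simp only [List.nodup_cons, List.mem_cons, not_or] at hnd
  refine ⟨hnd.2.2, fun c hc => ?_⟩
  have := hcl c (by simp [hc])
  simp only [List.mem_cons] at this
  rcases this with h | h | h
  · have : c = invLetter a := by simpa using congrArg invLetter h
    exact absurd (this ▸ hc) hnd.2.1
  · have : c = a := by simpa using congrArg invLetter h
    exact absurd (this ▸ hc) hnd.1.2
  · exact h

lemma IsBalanced.fst_ne {L : List (α × Bool)} {a : α × Bool}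
    (hL : IsBalanced (a :: invLetter a :: L)) {c : α × Bool} (hc : c ∈ L) : c.1 ≠ a.1 := by
  have hnd := hL.1
  simp only [List.nodup_cons, List.mem_cons, not_or] at hnd
  intro h
  by_cases h2 : c.2 = a.2
  · exact hnd.1.2 (Prod.ext h h2 ▸ hc)
  · refine hnd.2.1 ?_
    have : c = invLetter a :=
      Prod.ext h (by revert h2; cases c.2 <;> cases h3 : a.2 <;> simp [invLetter, h3])
    exact this ▸ hc

lemma isBalanced_invRev {L : List (α × Bool)} (hL : IsBalanced L) :
    IsBalanced (FreeGroup.invRev L) := by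
  have hmem : ∀ c, c ∈ FreeGroup.invRev L ↔ invLetter c ∈ L := by
    intro c
    have : FreeGroup.invRev L = (L.map invLetter).reverse := rfl
    rw [this, List.mem_reverse, List.mem_map]
    constructor
    · rintro ⟨a, ha, rfl⟩
      simpa using ha
    · exact fun h => ⟨_, h, by simp⟩
  refine ⟨?_, fun a ha => (hmem _).2 (hL.2 _ ((hmem a).1 ha))⟩
  exact List.nodup_reverse.2 (hL.1.map (Function.LeftInverse.injective invLetter_invLetter))

end Words

section Evaluation

variable {α G : Type*} [Group G]

/-- The value of a list of letters under an assignment of group elements to the variables. -/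
def evalWord (x : α → G) (L : List (α × Bool)) : G :=
  FreeGroup.lift x (FreeGroup.mk L)

/-- The value of a single letter. -/
def evalLetter (x : α → G) (a : α × Bool) : G := cond a.2 (x a.1) (x a.1)⁻¹

@[simp] lemma evalWord_nil (x : α → G) : evalWord x [] = 1 := by
  simp [evalWord, FreeGroup.lift_mk]

@[simp] lemma evalWord_cons (x : α → G) (a : α × Bool) (L : List (α × Bool)) :
    evalWord x (a :: L) = evalLetter x a * evalWord x L := by
  simp [evalWord, FreeGroup.lift_mk, evalLetter]

@[simp] lemma evalWord_append (x : α → G) (L L' : List (α × Bool)) :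
    evalWord x (L ++ L') = evalWord x L * evalWord x L' := by
  simp [evalWord, FreeGroup.lift_mk]

@[simp] lemma evalLetter_invLetter (x : α → G) (a : α × Bool) :
    evalLetter x (invLetter a) = (evalLetter x a)⁻¹ := by
  rcases a with ⟨i, _ | _⟩ <;> simp [evalLetter, invLetter]

variable [DecidableEq α]

lemma evalLetter_update_of_ne (x : α → G) {i : α} (u : G) {a : α × Bool} (h : a.1 ≠ i) :
    evalLetter (Function.update x i u) a = evalLetter x a := by
  simp [evalLetter, Function.update_of_ne h]

lemma evalWord_update_of_ne (x : α → G) {i : α} (u : G) {L : List (α × Bool)}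
    (h : ∀ a ∈ L, a.1 ≠ i) : evalWord (Function.update x i u) L = evalWord x L := by
  induction L with
  | nil => simp
  | cons a L ih =>
    simp only [List.mem_cons, forall_eq_or_imp] at h
    rw [evalWord_cons, evalWord_cons, ih h.2, evalLetter_update_of_ne x u h.1]

variable [Fintype G] {M : Type*} [AddCommMonoid M]

lemma sum_evalLetter_update (x : α → G) (a : α × Bool) (F : G → M) :
    ∑ u : G, F (evalLetter (Function.update x a.1 u) a) = ∑ u : G, F u := by
  rcases a with ⟨i, _ | _⟩
  · simpa [evalLetter] using Equiv.sum_comp (Equiv.inv G) F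
  · simp [evalLetter]

omit [Group G] in
lemma sum_sum_update [Fintype α] (i : α) (F : (α → G) → M) :
    ∑ x : α → G, ∑ u : G, F (Function.update x i u) = Fintype.card G • ∑ x : α → G, F x := by
  have hinv : Function.Involutive
      (fun p : (α → G) × G => (Function.update p.1 i p.2, p.1 i)) := by
    rintro ⟨x, u⟩
    simp
  have := Equiv.sum_comp hinv.toPerm (fun p : (α → G) × G => F p.1)
  simp only [Fintype.sum_prod_type, Function.Involutive.coe_toPerm] at this
  rw [this]
  simp [Finset.smul_sum]

end Evaluation

section Characters

variable {G : Type} [Group G]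

lemma FDRep.character_one_smul_eq_trace_smul_of_commute (V : FDRep ℂ G) [Simple V] (T : V →ₗ[ℂ] V)
    (hT : ∀ g, T * V.ρ g = V.ρ g * T) :
    V.character 1 • T = LinearMap.trace ℂ V T • (1 : V →ₗ[ℂ] V) := by
  let f : V ⟶ V := ⟨InducedCategory.homMk (ModuleCat.ofHom T), fun g => by
    ext1
    exact hT g⟩
  have hne : (𝟙 V : V ⟶ V) ≠ 0 := id_nonzero V
  obtain ⟨c, hc⟩ := (finrank_eq_one_iff_of_nonzero' (𝟙 V) hne).1
    (finrank_endomorphism_simple_eq_one ℂ V) f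
  have hcT : T = c • (1 : V →ₗ[ℂ] V) := by
    have := congrArg (fun h : V ⟶ V => h.hom.hom.hom) hc
    exact this.symm
  rw [hcT, map_smul, LinearMap.trace_one, smul_smul, FDRep.char_one, smul_eq_mul, mul_comm]

variable [Fintype G]

lemma FDRep.char_one_ne_zero (V : FDRep ℂ G) [hV : Simple V] : V.character 1 ≠ 0 := by
  intro h
  rw [FDRep.char_one, Nat.cast_eq_zero, Module.finrank_zero_iff] at h
  have h1 := (FDRep.simple_iff_char_is_norm_one V).1 hV
  have h2 : ∀ g, V.character g = 0 := fun g => by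
    rw [FDRep.character, Subsingleton.elim (V.ρ g) 0, map_zero]
  simp only [h2, mul_zero, Finset.sum_const_zero] at h1
  exact NeZero.ne (Nat.card G : ℂ) h1.symm

lemma FDRep.sum_character_mul_smul (V : FDRep ℂ G) [hV : Simple V] :
    V.character 1 • ∑ b : G, V.character b • V.ρ b⁻¹ = (Fintype.card G : ℂ) • (1 : V →ₗ[ℂ] V) := by
  rw [V.character_one_smul_eq_trace_smul_of_commute]
  · rw [map_sum]
    simp only [map_smul, smul_eq_mul]
    congr 1
    rw [Fintype.card_eq_nat_card]
    exact (FDRep.simple_iff_char_is_norm_one V).1 hV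
  · intro g
    rw [Finset.sum_mul, Finset.mul_sum]
    refine Fintype.sum_equiv (MulAut.conj g⁻¹).toEquiv _ _ fun b => ?_
    simp only [MulEquiv.toEquiv_eq_coe, MulEquiv.coe_toEquiv, MulAut.conj_apply, FDRep.char_conj,
      smul_mul_assoc, mul_smul_comm, ← map_mul]
    congr 2
    group

lemma FDRep.sum_conj (V : FDRep ℂ G) [Simple V] (T : V →ₗ[ℂ] V) :
    V.character 1 • ∑ a : G, V.ρ a * T * V.ρ a⁻¹ =
      ((Fintype.card G : ℂ) * LinearMap.trace ℂ V T) • (1 : V →ₗ[ℂ] V) := by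
  rw [V.character_one_smul_eq_trace_smul_of_commute]
  · congr 1
    rw [map_sum]
    have : ∀ a : G, LinearMap.trace ℂ V (V.ρ a * T * V.ρ a⁻¹) = LinearMap.trace ℂ V T := fun a => by
      rw [LinearMap.trace_mul_comm, ← mul_assoc, ← map_mul, inv_mul_cancel, map_one, one_mul]
    simp [this]
  · intro g
    rw [Finset.sum_mul, Finset.mul_sum]
    refine Fintype.sum_equiv (Equiv.mulLeft g⁻¹) _ _ fun b => ?_
    simp only [Equiv.coe_mulLeft, mul_inv_rev, inv_inv, map_mul, mul_assoc]
    rw [← mul_assoc (V.ρ g) (V.ρ g⁻¹), ← map_mul V.ρ g, mul_inv_cancel, map_one, one_mul]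

/-- Averaging over a letter occurring in one character together with its inverse. -/
lemma FDRep.sum_character_split (V : FDRep ℂ G) [Simple V] (p u v : G) :
    V.character 1 * ∑ a : G, V.character (p * a * u * a⁻¹ * v) =
      Fintype.card G * (V.character u * V.character (p * v)) := by
  have h := congrArg (fun T => LinearMap.trace ℂ V (V.ρ p * T * V.ρ v)) (V.sum_conj (V.ρ u))
  simp only [mul_smul_comm, smul_mul_assoc, map_smul, smul_eq_mul, mul_one, Finset.mul_sum,
    Finset.sum_mul, map_sum, ← map_mul, ← mul_assoc] at h
  rw [Finset.mul_sum, ← mul_assoc]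
  exact h

/-- Averaging over a letter and its inverse occurring in two different characters. -/
lemma FDRep.sum_character_merge (V : FDRep ℂ G) [Simple V] (q u p v : G) :
    V.character 1 * ∑ b : G, V.character (q * b * u) * V.character (p * b⁻¹ * v) =
      Fintype.card G * V.character (p * u * q * v) := by
  have h := congrArg (fun T => LinearMap.trace ℂ V (V.ρ (p * u) * T * V.ρ (q * v)))
    V.sum_character_mul_smul
  simp only [mul_smul_comm, smul_mul_assoc, map_smul, smul_eq_mul, mul_one, Finset.mul_sum,
    Finset.sum_mul, map_sum, ← map_mul] at h
  rw [Finset.mul_sum]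
  rw [← mul_assoc (p * u)] at h
  refine Eq.trans ?_ h
  refine Fintype.sum_equiv ((Equiv.mulLeft q).trans (Equiv.mulRight u)) _ _ fun b => ?_
  simp only [Equiv.trans_apply, Equiv.coe_mulLeft, Equiv.coe_mulRight]
  congr 2
  rw [FDRep.character]
  congr 2
  group

lemma FDRep.sum_sum_character_interleaved (V : FDRep ℂ G) [Simple V] (p q r s t : G) :
    V.character 1 ^ 2 * ∑ b : G, ∑ a : G,
        V.character (p * a * (q * b * r) * a⁻¹ * (s * b⁻¹ * t)) =
      (Fintype.card G : ℂ) ^ 2 * V.character (p * s * r * q * t) := by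
  have h1 := fun b => V.sum_character_split p (q * b * r) (s * b⁻¹ * t)
  have h2 := V.sum_character_merge q r (p * s) t
  simp only [mul_assoc] at h1 h2 ⊢
  rw [pow_two, mul_assoc, Finset.mul_sum]
  simp only [h1]
  rw [← Finset.mul_sum, mul_left_comm, h2]
  ring

lemma FDRep.simple_of_isIrreducible {V : Type} [AddCommGroup V] [Module ℂ V]
    [FiniteDimensional ℂ V] (ρ : Representation ℂ G V) [ρ.IsIrreducible] :
    Simple (FDRep.of ρ) := by
  have : Invertible (Nat.card G : ℂ) := invertibleOfNonzero (NeZero.ne _)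
  rw [FDRep.simple_iff_char_is_norm_one]
  have h := Representation.char_orthonormal ρ ρ
  rw [if_pos ⟨Representation.Equiv.refl ρ⟩, inv_mul_eq_one₀ (NeZero.ne _)] at h
  exact h.symm

omit [Fintype G] in
lemma asAlgebraHom_ofModule' (M : Type*) [AddCommGroup M] [Module ℂ M]
    [Module (MonoidAlgebra ℂ G) M] [IsScalarTower ℂ (MonoidAlgebra ℂ G) M] :
    (Representation.ofModule' (k := ℂ) (G := G) M).asAlgebraHom = Algebra.lsmul ℂ ℂ M :=
  (MonoidAlgebra.lift ℂ (M →ₗ[ℂ] M) G).apply_symm_apply _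

omit [Fintype G] in
lemma isIrreducible_ofModule' (M : Type*) [AddCommGroup M] [Module ℂ M]
    [Module (MonoidAlgebra ℂ G) M] [IsScalarTower ℂ (MonoidAlgebra ℂ G) M]
    [IsSimpleModule (MonoidAlgebra ℂ G) M] :
    (Representation.ofModule' (k := ℂ) (G := G) M).IsIrreducible := by
  rw [Representation.irreducible_iff_isSimpleModule_asModule]
  let ρ := Representation.ofModule' (k := ℂ) (G := G) M
  let φ : ρ.asModule ≃ₗ[MonoidAlgebra ℂ G] M :=
    { ρ.asModuleEquiv.toAddEquiv with
      map_smul' := fun r m =>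
        LinearMap.congr_fun (AlgHom.congr_fun (asAlgebraHom_ofModule' (G := G) M) r) _ }
  exact IsSimpleModule.congr φ

/-- A class function orthogonal to all irreducible characters vanishes. -/
lemma eq_zero_of_sum_mul_character_eq_zero (φ : G → ℂ) (hφ : ∀ g h, φ (h * g * h⁻¹) = φ g)
    (h : ∀ V : FDRep ℂ G, Simple V → ∑ g : G, φ g * V.character g⁻¹ = 0) : φ = 0 := by
  have hsimple : ∀ V : FDRep ℂ G, Simple V → ∑ g : G, φ g • V.ρ g⁻¹ = 0 := by
    intro V hV
    have h1 := V.character_one_smul_eq_trace_smul_of_commute (∑ g : G, φ g • V.ρ g⁻¹) (by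
      intro g
      rw [Finset.sum_mul, Finset.mul_sum]
      refine Fintype.sum_equiv (MulAut.conj g⁻¹).toEquiv _ _ fun b => ?_
      simp only [MulEquiv.toEquiv_eq_coe, MulEquiv.coe_toEquiv, MulAut.conj_apply, hφ,
        smul_mul_assoc, mul_smul_comm, ← map_mul]
      congr 2
      group)
    have h2 : LinearMap.trace ℂ V (∑ g : G, φ g • V.ρ g⁻¹) = 0 := by
      rw [map_sum]
      simp only [map_smul, smul_eq_mul]
      exact h V hV
    rw [h2, zero_smul] at h1
    exact (smul_eq_zero.1 h1).resolve_left V.char_one_ne_zero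
  have hrep : ∀ {V : Type} [AddCommGroup V] [Module ℂ V] [FiniteDimensional ℂ V]
      (ρ : Representation ℂ G V), ρ.IsIrreducible → ∑ g : G, φ g • ρ g⁻¹ = 0 :=
    fun ρ _ => hsimple (FDRep.of ρ) (FDRep.simple_of_isIrreducible ρ)
  let e : MonoidAlgebra ℂ G := ∑ g : G, MonoidAlgebra.single g⁻¹ (φ g)
  have he : e ∈ Ring.jacobson (MonoidAlgebra ℂ G) := by
    rw [Ring.jacobson_eq_sInf_isMaximal, Submodule.mem_sInf]
    intro I hI
    have hs : IsSimpleModule (MonoidAlgebra ℂ G) (MonoidAlgebra ℂ G ⧸ I) := by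
      rw [isSimpleModule_iff_isCoatom]
      exact Ideal.isMaximal_def.1 hI
    have hfin : FiniteDimensional ℂ (MonoidAlgebra ℂ G ⧸ I) :=
      Module.Finite.of_surjective (I.mkQ.restrictScalars ℂ) I.mkQ_surjective
    have h0 := hrep _ (isIrreducible_ofModule' (G := G) (MonoidAlgebra ℂ G ⧸ I))
    have h1 : (Representation.ofModule' (k := ℂ) (G := G)
        (MonoidAlgebra ℂ G ⧸ I)).asAlgebraHom e = 0 := by
      simpa only [e, map_sum, Representation.asAlgebraHom_single] using h0
    rw [asAlgebraHom_ofModule'] at h1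
    have h2 : (Submodule.Quotient.mk (e • 1) : MonoidAlgebra ℂ G ⧸ I) = 0 :=
      LinearMap.congr_fun h1 (Submodule.Quotient.mk 1)
    rw [smul_eq_mul, mul_one] at h2
    exact (Submodule.Quotient.mk_eq_zero I).1 h2
  have he0 : e = 0 := by
    rw [Ring.jacobson, IsSemisimpleModule.jacobson_eq_bot] at he
    simpa using he
  classical
  funext g
  have h1 := congrArg (fun x => MonoidAlgebra.coeff x g⁻¹) he0
  simpa [e, MonoidAlgebra.coeff_sum, Finsupp.single_apply] using h1

end Characters

section IrreducibleCharacters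

/-- The set of irreducible complex characters of `G`. -/
def irrChar (G : Type) [Group G] : Set (G → ℂ) :=
  {f | ∃ V : FDRep ℂ G, Simple V ∧ f = V.character}

variable {G : Type} [Group G] [Fintype G]

open scoped Classical in
lemma sum_irrChar_mul_irrChar {f f' : G → ℂ} (hf : f ∈ irrChar G) (hf' : f' ∈ irrChar G) :
    ∑ g : G, f g * f' g⁻¹ = if f = f' then (Fintype.card G : ℂ) else 0 := by
  obtain ⟨V, hV, rfl⟩ := hf
  obtain ⟨W, hW, rfl⟩ := hf'
  have : Invertible (Nat.card G : ℂ) := invertibleOfNonzero (NeZero.ne _)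
  split_ifs with h
  · rw [← h, Fintype.card_eq_nat_card]
    exact (FDRep.simple_iff_char_is_norm_one V).1 hV
  · have h1 := FDRep.char_orthonormal V W
    rw [if_neg fun ⟨i⟩ => h (FDRep.char_iso i)] at h1
    exact (mul_eq_zero.1 h1).resolve_left (inv_ne_zero (NeZero.ne _))

lemma linearIndependent_irrChar : LinearIndependent ℂ (Subtype.val : irrChar G → G → ℂ) := by
  classical
  rw [linearIndependent_iff']
  intro s c hc f hf
  have h1 : ∑ i ∈ s, c i * ∑ g : G, i.1 g * f.1 g⁻¹ = 0 := by
    simp only [Finset.mul_sum]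
    rw [Finset.sum_comm]
    refine Finset.sum_eq_zero fun g _ => ?_
    have h2 := congrFun hc g
    simp only [Finset.sum_apply, Pi.smul_apply, smul_eq_mul, Pi.zero_apply] at h2
    simp only [← mul_assoc]
    rw [← Finset.sum_mul, h2, zero_mul]
  have h3 : ∀ i : irrChar G, ∑ g : G, i.1 g * f.1 g⁻¹ =
      if i = f then (Fintype.card G : ℂ) else 0 := fun i => by
    rw [sum_irrChar_mul_irrChar i.2 f.2]
    simp only [Subtype.ext_iff]
  simp only [h3, mul_ite, mul_zero, Finset.sum_ite_eq', hf, if_true] at h1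
  exact (mul_eq_zero.1 h1).resolve_right (NeZero.ne _)

lemma finite_irrChar : (irrChar G).Finite :=
  linearIndependent_irrChar.setFinite

omit [Fintype G] in
lemma irrChar_conj {f : G → ℂ} (hf : f ∈ irrChar G) (g h : G) : f (h * g * h⁻¹) = f g := by
  obtain ⟨V, -, rfl⟩ := hf
  exact V.char_conj g h

open scoped Classical in
/-- Column orthogonality at the identity. -/
lemma sum_irrChar_one_mul (h : G) :
    ∑ f ∈ (finite_irrChar (G := G)).toFinset, f 1 * f h =
      if h = 1 then (Fintype.card G : ℂ) else 0 := by
  let φ : G → ℂ := fun h => (if h = 1 then (Fintype.card G : ℂ) else 0) -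
    ∑ f ∈ (finite_irrChar (G := G)).toFinset, f 1 * f h
  have hφ : φ = 0 := by
    refine eq_zero_of_sum_mul_character_eq_zero φ (fun g h => ?_) fun V hV => ?_
    · simp only [φ, conj_eq_one_iff]
      congr 1
      exact Finset.sum_congr rfl fun f hf => by
        rw [irrChar_conj ((Set.Finite.mem_toFinset _).1 hf)]
    · have hVm : V.character ∈ irrChar G := ⟨V, hV, rfl⟩
      simp only [φ, sub_mul, Finset.sum_sub_distrib, Finset.sum_mul, mul_assoc, ite_mul, zero_mul,
        Finset.sum_ite_eq', Finset.mem_univ, if_true, inv_one]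
      rw [Finset.sum_comm]
      simp only [← Finset.mul_sum]
      rw [Finset.sum_congr rfl fun f hf => by
        rw [sum_irrChar_mul_irrChar ((Set.Finite.mem_toFinset _).1 hf) hVm]]
      simp [hVm, mul_comm]
  exact (sub_eq_zero.1 (congrFun hφ h)).symm

end IrreducibleCharacters

section WordMaps

variable {α : Type*} [Fintype α] [DecidableEq α]

lemma sum_character_evalWord_interleaved {G : Type} [Group G] [Fintype G] (V : FDRep ℂ G)
    [Simple V] {P Q R S T : List (α × Bool)} {a b : α × Bool} (hab : b.1 ≠ a.1)
    (ha : ∀ c ∈ P ++ S ++ R ++ Q ++ T, c.1 ≠ a.1) (hb : ∀ c ∈ P ++ S ++ R ++ Q ++ T, c.1 ≠ b.1)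
    (g : G) :
    V.character 1 ^ 2 * ∑ x : α → G, V.character (evalWord x (P ++ a :: (Q ++ b ::
        (R ++ invLetter a :: (S ++ invLetter b :: T)))) * g) =
      ∑ x : α → G, V.character (evalWord x (P ++ S ++ R ++ Q ++ T) * g) := by
  simp only [List.mem_append, or_imp, forall_and] at ha hb
  obtain ⟨⟨⟨⟨haP, haS⟩, haR⟩, haQ⟩, haT⟩ := ha
  obtain ⟨⟨⟨⟨hbP, hbS⟩, hbR⟩, hbQ⟩, hbT⟩ := hb
  set F : (α → G) → ℂ := fun x => V.character (evalWord x (P ++ a :: (Q ++ b ::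
    (R ++ invLetter a :: (S ++ invLetter b :: T)))) * g) with hF
  have hcard : (Fintype.card G : ℂ) ^ 2 ≠ 0 := pow_ne_zero _ (NeZero.ne _)
  have havg : (Fintype.card G : ℂ) ^ 2 * ∑ x, F x = ∑ x : α → G, ∑ u : G, ∑ v : G,
      F (Function.update (Function.update x a.1 u) b.1 v) := by
    rw [sum_sum_update a.1 (fun y => ∑ v : G, F (Function.update y b.1 v)),
      sum_sum_update b.1 F, nsmul_eq_mul, nsmul_eq_mul, ← mul_assoc, pow_two]
  have hinner : ∀ x : α → G, V.character 1 ^ 2 * ∑ u : G, ∑ v : G,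
      F (Function.update (Function.update x a.1 u) b.1 v) =
        (Fintype.card G : ℂ) ^ 2 * V.character (evalWord x (P ++ S ++ R ++ Q ++ T) * g) := by
    intro x
    let Φ : G → G → ℂ := fun A B => V.character (evalWord x P * A * (evalWord x Q * B *
      evalWord x R) * A⁻¹ * (evalWord x S * B⁻¹ * (evalWord x T * g)))
    have hΦ : ∀ u v, F (Function.update (Function.update x a.1 u) b.1 v) =
        Φ (evalLetter (Function.update x a.1 u) a)
          (evalLetter (Function.update (Function.update x a.1 u) b.1 v) b) := by
      intro u v
      simp only [hF, Φ, evalWord_append, evalWord_cons, evalLetter_invLetter,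
        evalWord_update_of_ne _ _ hbP, evalWord_update_of_ne _ _ hbQ,
        evalWord_update_of_ne _ _ hbR, evalWord_update_of_ne _ _ hbS,
        evalWord_update_of_ne _ _ hbT, evalWord_update_of_ne _ _ haP,
        evalWord_update_of_ne _ _ haQ, evalWord_update_of_ne _ _ haR,
        evalWord_update_of_ne _ _ haS, evalWord_update_of_ne _ _ haT,
        evalLetter_update_of_ne _ _ hab.symm, mul_assoc]
    simp only [hΦ]
    rw [Finset.sum_congr rfl fun u _ =>
      sum_evalLetter_update (Function.update x a.1 u) b (Φ (evalLetter (Function.update x a.1 u) a)),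
      sum_evalLetter_update x a (fun A => ∑ B, Φ A B), Finset.sum_comm,
      V.sum_sum_character_interleaved]
    simp only [evalWord_append, mul_assoc]
  refine mul_left_cancel₀ hcard ?_
  rw [mul_left_comm, havg, Finset.mul_sum, Finset.mul_sum]
  exact Finset.sum_congr rfl fun x _ => hinner x

lemma exists_exponent_sum_character_evalWord (n : ℕ) :
    ∀ L : List (α × Bool), L.length = n → IsBalanced L →
      ∃ m : ℕ, (L ≠ [] → FreeGroup.IsReduced L → 2 ≤ m) ∧
        ∀ (G : Type) [Group G] [Fintype G] (V : FDRep ℂ G) (_ : Simple V) (g : G),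
          V.character 1 ^ m * ∑ x : α → G, V.character (evalWord x L * g) =
            (Fintype.card G : ℂ) ^ Fintype.card α * V.character g := by
  induction n using Nat.strong_induction_on with
  | _ n ih =>
    intro L hn hL
    by_cases hne : L = []
    · subst hne
      exact ⟨0, fun h => absurd rfl h, fun G _ _ V _ g => by simp⟩
    rcases hL.exists_cancelling_or_interleaved hne with
      ⟨P, T, a, rfl⟩ | ⟨P, Q, R, S, T, a, b, rfl⟩
    · have hL' : IsBalanced (P ++ T) := by
        refine IsBalanced.of_cons_cons (a := a) (hL.of_perm ?_)
        exact List.perm_middle.trans (List.perm_middle.cons a)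
      obtain ⟨m, -, hm⟩ := ih (P ++ T).length (by simp at hn ⊢; omega) _ rfl hL'
      refine ⟨m, fun _ hred => ?_, fun G _ _ V hV g => ?_⟩
      · have := (List.isChain_cons_cons.1 (List.isChain_append.1 hred).2.1).1 rfl
        simp [invLetter] at this
      · rw [← hm G V hV g]
        simp
    · have hperm : (P ++ a :: (Q ++ b :: (R ++ invLetter a :: (S ++ invLetter b :: T)))).Perm
          (a :: invLetter a :: b :: invLetter b :: (P ++ S ++ R ++ Q ++ T)) := by
        rw [List.perm_iff_count]
        intro c
        simp only [List.count_append, List.count_cons]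
        omega
      have hL1 := hL.of_perm hperm
      have hL2 := hL1.of_cons_cons
      obtain ⟨m, -, hm⟩ := ih (P ++ S ++ R ++ Q ++ T).length (by simp at hn ⊢; omega) _ rfl
        hL2.of_cons_cons
      refine ⟨m + 2, fun _ _ => by omega, fun G _ _ V hV g => ?_⟩
      rw [pow_add, mul_assoc, sum_character_evalWord_interleaved V
        (hL1.fst_ne (c := b) (by simp)) (fun c hc => hL1.fst_ne
          (List.mem_cons_of_mem _ (List.mem_cons_of_mem _ hc)))
        (fun c hc => hL2.fst_ne hc), hm G V hV g]

end WordMaps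

/-- Fourier expansion for admissible words: let `w ≠ 1` be a word in the free group on
`d ≥ 1` generators in which every variable occurs exactly once with exponent `1` and
exactly once with exponent `-1`.  Then there is a positive integer `k` (depending only
on `w`) such that for every finite group `G` and every `g ∈ G`, the number of solutions
of `w(g₁, …, g_d) = g` equals `|G|^{d-1} ∑_{χ ∈ Irr(G)} χ(g)/χ(1)^k`. -/
theorem admissible_word_fourier_formula (d : ℕ) (hd : 1 ≤ d) (w : FreeGroup (Fin d))
    (hw : w ≠ 1)
    (hadm : ∀ i : Fin d, w.toWord.count (i, true) = 1 ∧ w.toWord.count (i, false) = 1) :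
    ∃ k : ℕ, 0 < k ∧
      ∀ (G : Type) [Group G] [Fintype G] (g : G),
        (Nat.card {x : Fin d → G // FreeGroup.lift x w = g} : ℂ) =
          (Fintype.card G : ℂ) ^ (d - 1) *
            ∑ᶠ f ∈ {f : G → ℂ | ∃ V : FDRep ℂ G, Simple V ∧ f = V.character},
              f g / (f 1) ^ k := by
  have hcount : ∀ c : Fin d × Bool, w.toWord.count c = 1 := by
    rintro ⟨i, _ | _⟩
    exacts [(hadm i).2, (hadm i).1]
  have hbal : IsBalanced w.toWord :=
    ⟨List.nodup_iff_count_le_one.2 fun c => (hcount c).le,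
      fun c _ => List.count_pos_iff.1 (by rw [hcount]; exact one_pos)⟩
  have hbal' : IsBalanced w⁻¹.toWord := by
    rw [FreeGroup.toWord_inv]
    exact isBalanced_invRev hbal
  obtain ⟨m, hm2, hm⟩ := exists_exponent_sum_character_evalWord _ w⁻¹.toWord rfl hbal'
  replace hm2 := hm2 (fun h => hw (inv_eq_one.1 (FreeGroup.toWord_eq_nil_iff.1 h)))
    FreeGroup.isReduced_toWord
  obtain ⟨k, rfl⟩ : ∃ k, m = k + 1 := ⟨m - 1, by omega⟩
  obtain ⟨e, rfl⟩ : ∃ e, d = e + 1 := ⟨d - 1, by omega⟩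
  refine ⟨k, by omega, fun G _ _ g => ?_⟩
  classical
  have heval : ∀ x : Fin (e + 1) → G, evalWord x w⁻¹.toWord = (FreeGroup.lift x w)⁻¹ := fun x => by
    rw [evalWord, FreeGroup.mk_toWord, map_inv]
  have hcard : (Fintype.card G : ℂ) ≠ 0 := NeZero.ne _
  have hterm : ∀ f ∈ irrChar G, f 1 * ∑ x : Fin (e + 1) → G, f (evalWord x w⁻¹.toWord * g) =
      (Fintype.card G : ℂ) ^ (e + 1) * (f g / f 1 ^ k) := by
    rintro f ⟨V, hV, rfl⟩
    have h1 := hm G V hV g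
    have h2 := V.char_one_ne_zero
    rw [Fintype.card_fin] at h1
    field_simp
    rw [← h1]
    ring
  have hN : (Fintype.card G : ℂ) * Nat.card {x : Fin (e + 1) → G // FreeGroup.lift x w = g} =
      ∑ x : Fin (e + 1) → G, ∑ f ∈ (finite_irrChar (G := G)).toFinset,
        f 1 * f (evalWord x w⁻¹.toWord * g) := by
    simp only [sum_irrChar_one_mul, heval, inv_mul_eq_one]
    rw [Nat.card_eq_fintype_card, Fintype.card_subtype, Finset.sum_ite, Finset.sum_const,
      Finset.sum_const_zero, add_zero, nsmul_eq_mul, mul_comm]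
  change _ = _ * ∑ᶠ f ∈ irrChar G, f g / f 1 ^ k
  rw [finsum_mem_eq_finite_toFinset_sum _ finite_irrChar]
  refine mul_left_cancel₀ hcard ?_
  rw [hN, Finset.sum_comm, Nat.add_sub_cancel, ← mul_assoc, ← pow_succ', Finset.mul_sum]
  refine Finset.sum_congr rfl fun f hf => ?_
  rw [← Finset.mul_sum, hterm f ((Set.Finite.mem_toFinset _).1 hf)]
end
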